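/- Let d ≥ 1 and α ∈ (0,1). There exists C > 0 depending only on d and α such that for every S : ℝ × ℝ^d × ℝ^d → ℝ with [S]_{C_ℓ^α} < ∞, every function g : ℝ × ℝ^d × ℝ^d → ℝ which is C¹ in (t,x), C² in v, satisfies (∂_t + v·∇_x) g = Δ_v g + S at every point, and has [g]_{C_ℓ^{2+α}} < ∞, obeys [g]_{C_ℓ^{2+α}} ≤ C [S]_{C_ℓ^α}. -/

import Mathlib

open Real MeasureTheory
open scoped BigOperators ENNReal

noncomputable section

abbrev E (d : ℕ) := EuclideanSpace ℝ (Fin d)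
abbrev Z (d : ℕ) := ℝ × E d × E d

variable {d : ℕ}

/-- The kinetic cylinder `Q_r(z₀)`. -/
def kCyl (r : ℝ) (z₀ : Z d) : Set (Z d) :=
  {z | z₀.1 - r ^ 2 < z.1 ∧ z.1 ≤ z₀.1 ∧
    ‖z.2.1 - z₀.2.1 - (z.1 - z₀.1) • z₀.2.2‖ < r ^ 3 ∧ ‖z.2.2 - z₀.2.2‖ < r}

/-- Partial derivative in time. -/
def pt (g : Z d → ℝ) (z : Z d) : ℝ := deriv (fun s => g (s, z.2.1, z.2.2)) z.1

/-- Partial derivative in the direction `x i`. -/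
def px (g : Z d → ℝ) (i : Fin d) (z : Z d) : ℝ :=
  deriv (fun s : ℝ => g (z.1, z.2.1 + s • EuclideanSpace.single i (1 : ℝ), z.2.2)) 0

/-- Partial derivative in the direction `v i`. -/
def pv (g : Z d → ℝ) (i : Fin d) (z : Z d) : ℝ :=
  deriv (fun s : ℝ => g (z.1, z.2.1, z.2.2 + s • EuclideanSpace.single i (1 : ℝ))) 0

/-- Second partial derivative in `v i`, `v j`. -/
def pvv (g : Z d → ℝ) (i j : Fin d) : Z d → ℝ := pv (pv g j) i

/-- Transport derivative `∂_t g + v ⋅ ∇_x g`. -/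
def Yop (g : Z d → ℝ) (z : Z d) : ℝ := pt g z + ∑ i, z.2.2 i * px g i z

/-- Euclidean norm of the velocity gradient `∇_v g`. -/
def gradvNorm (g : Z d → ℝ) (z : Z d) : ℝ := Real.sqrt (∑ i, (pv g i z) ^ 2)

/-- (Frobenius) norm of the velocity Hessian `D²_v g`. -/
def hessvNorm (g : Z d → ℝ) (z : Z d) : ℝ := Real.sqrt (∑ i, ∑ j, (pvv g i j z) ^ 2)

/-- `g` is `C¹` in `(t,x)` and `C²` in `v` on `Q`, with continuous partial derivatives. -/
structure KinReg (g : Z d → ℝ) (Q : Set (Z d)) : Prop where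
  cont : ContinuousOn g Q
  dt : ∀ z ∈ Q, DifferentiableAt ℝ (fun s => g (s, z.2.1, z.2.2)) z.1
  dx : ∀ z ∈ Q, ∀ i, DifferentiableAt ℝ
    (fun s : ℝ => g (z.1, z.2.1 + s • EuclideanSpace.single i (1 : ℝ), z.2.2)) 0
  dv : ∀ z ∈ Q, ∀ i, DifferentiableAt ℝ
    (fun s : ℝ => g (z.1, z.2.1, z.2.2 + s • EuclideanSpace.single i (1 : ℝ))) 0
  dvv : ∀ z ∈ Q, ∀ i j, DifferentiableAt ℝ
    (fun s : ℝ => pv g j (z.1, z.2.1, z.2.2 + s • EuclideanSpace.single i (1 : ℝ))) 0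
  ptc : ContinuousOn (pt g) Q
  pxc : ∀ i, ContinuousOn (px g i) Q
  pvc : ∀ i, ContinuousOn (pv g i) Q
  pvvc : ∀ i j, ContinuousOn (pvv g i j) Q

/-- Sup norm (in `ℝ≥0∞`) of `h` over the set `Q`. -/
def supAbs (Q : Set (Z d)) (h : Z d → ℝ) : ℝ≥0∞ := ⨆ z ∈ Q, ENNReal.ofReal |h z|

/-- Kinetic Hölder seminorm of exponent `β` on `Q`. -/
def kHolder (β : ℝ) (Q : Set (Z d)) (h : Z d → ℝ) : ℝ≥0∞ :=
  ⨆ (z₀ ∈ Q) (r : ℝ) (_ : 0 < r) (_ : kCyl r z₀ ⊆ Q) (z ∈ kCyl r z₀),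
    ENNReal.ofReal (|h z - h z₀| / r ^ β)

/-- Polynomial of kinetic degree at most 2. -/
def kpoly (a b : ℝ) (q : Fin d → ℝ) (M : Matrix (Fin d) (Fin d) ℝ) (z : Z d) : ℝ :=
  a + b * z.1 + ∑ i, q i * z.2.2 i + (1 / 2) * ∑ i, ∑ j, M i j * z.2.2 i * z.2.2 j

/-- Kinetic Hölder seminorm of order `2 + α` on `Q`, by approximation with polynomials of
kinetic degree at most 2. -/
def kSemi2 (α : ℝ) (Q : Set (Z d)) (g : Z d → ℝ) : ℝ≥0∞ :=
  ⨆ (z₀ ∈ Q) (r : ℝ) (_ : 0 < r) (_ : kCyl r z₀ ⊆ Q),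
    (⨅ (a : ℝ) (b : ℝ) (q : Fin d → ℝ) (M : Matrix (Fin d) (Fin d) ℝ),
      ⨆ z ∈ kCyl r z₀, ENNReal.ofReal |g z - kpoly a b q M z|)
      / ENNReal.ofReal (r ^ (2 + α))

/-! Taking `r` large in the definition of `[g]_{C_ℓ^{2+α}}` shows that `g` stays within a power of
the weight `1 + |x|² + |v|²` of a polynomial `p` of kinetic degree at most two, chosen so that
`(∂_t + v·∇_x - Δ_v) p` is the value of the source at the origin. On `-1 ≤ t ≤ 0` the function
`w = g - p` is then compared with the solution `U` of the homogeneous equation that equals `w` at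
time `-1`, given explicitly by the Gaussian kernel of Kolmogorov: by the maximum principle with an
exponential barrier, `|w - U|` is at most the oscillation of the source. The function `U` is smooth,
so near the origin its Taylor polynomial of kinetic degree two satisfies `∂_t = Δ_v` and is accurate
up to a cubic error. Rescaled to a cylinder of size `ρ` and evaluated at size `ρ l`, this replaces a
bound `N` on the seminorm by `C (l^{1-α} N + l^{-2-α} [S])`; for `l` small the first term is
absorbed. -/

open Filter Topology

/-- The limit of symmetric second difference quotients of `f` at `0`: a weak second derivative,
stable under perturbations of size `o(s ^ 2)`. -/
def HasSymmSecondDeriv (f : ℝ → ℝ) (m : ℝ) : Prop :=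
  Tendsto (fun s => (f s + f (-s) - 2 * f 0) / s ^ 2) (𝓝[≠] 0) (𝓝 m)

namespace HasSymmSecondDeriv

variable {f g : ℝ → ℝ} {m n : ℝ}

lemma add (hf : HasSymmSecondDeriv f m) (hg : HasSymmSecondDeriv g n) :
    HasSymmSecondDeriv (fun s => f s + g s) (m + n) := by
  refine (Tendsto.add hf hg).congr fun s => ?_
  ring

lemma const_mul (c : ℝ) (hf : HasSymmSecondDeriv f m) :
    HasSymmSecondDeriv (fun s => c * f s) (c * m) := by
  refine (Tendsto.const_mul c hf).congr fun s => ?_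
  ring

lemma comp_mul_left (hf : HasSymmSecondDeriv f m) {c : ℝ} (hc : c ≠ 0) :
    HasSymmSecondDeriv (fun s => f (c * s)) (c ^ 2 * m) := by
  have hlim : Tendsto (fun s : ℝ => c * s) (𝓝[≠] 0) (𝓝[≠] 0) :=
    tendsto_nhdsWithin_iff.2 ⟨((continuous_const_mul c).tendsto' 0 0 (mul_zero c)).mono_left
      nhdsWithin_le_nhds, by filter_upwards [self_mem_nhdsWithin] with s hs using mul_ne_zero hc hs⟩
  refine ((hf.comp hlim).const_mul (c ^ 2)).congr' ?_
  filter_upwards [self_mem_nhdsWithin] with s (hs : s ≠ 0)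
  simp only [Function.comp_apply, mul_neg, mul_zero]
  field_simp

lemma nonpos_of_forall_le (hf : HasSymmSecondDeriv f m) (hmax : ∀ s, f s ≤ f 0) : m ≤ 0 := by
  refine le_of_tendsto hf (Eventually.of_forall fun s => ?_)
  exact div_nonpos_of_nonpos_of_nonneg (by linarith [hmax s, hmax (-s)]) (sq_nonneg s)

lemma of_hasDerivAt {f' : ℝ → ℝ} (hf : ∀ s, HasDerivAt f (f' s) s) (hf' : HasDerivAt f' m 0) :
    HasSymmSecondDeriv f m := by
  have hdiff (s : ℝ) : HasDerivAt (fun s => f s + f (-s) - 2 * f 0) (f' s - f' (-s)) s := by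
    simpa [sub_eq_add_neg] using ((hf s).add ((hf (-s)).scomp s (hasDerivAt_neg s))).sub_const
      (2 * f 0)
  have hslope : Tendsto (fun s => (f' s - f' (-s)) / (2 * s)) (𝓝[≠] 0) (𝓝 m) := by
    have hodd : HasDerivAt (fun s => f' s - f' (-s)) (m + m) 0 := by
      have hf'' : HasDerivAt f' m (-0) := by simpa using hf'
      simpa [Function.comp_def] using hf'.fun_sub (hf''.scomp 0 (hasDerivAt_neg 0))
    convert hodd.tendsto_slope.const_mul (1 / 2) using 2 with s
    · simp only [slope_def_field, neg_zero, sub_self, sub_zero]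
      ring
    · ring
  refine HasDerivAt.lhopital_zero_nhdsNE (g := fun s : ℝ => s ^ 2) (g' := fun s => 2 * s)
    (Eventually.of_forall hdiff)
    (Eventually.of_forall fun s => by simpa using hasDerivAt_pow 2 s) ?_ ?_ ?_ hslope
  · filter_upwards [self_mem_nhdsWithin] with s (hs : s ≠ 0) using mul_ne_zero two_ne_zero hs
  · exact tendsto_nhdsWithin_of_tendsto_nhds
      ((hdiff 0).continuousAt.tendsto.trans (by simp [two_mul]))
  · exact tendsto_nhdsWithin_of_tendsto_nhds ((continuous_pow 2).tendsto' 0 0 (by simp))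

lemma zero_of_abs_le_cube {C δ : ℝ} (hδ : 0 < δ) (hf : ∀ s, |s| < δ → |f s| ≤ C * |s| ^ 3) :
    HasSymmSecondDeriv f 0 := by
  have h0 : f 0 = 0 := by simpa using hf 0 (by simpa using hδ)
  refine squeeze_zero_norm' (a := fun s => 2 * C * |s|) ?_ ?_
  · filter_upwards [self_mem_nhdsWithin, nhdsWithin_le_nhds (Metric.ball_mem_nhds (0 : ℝ) hδ)]
      with s (hs : s ≠ 0) hsδ
    have hs' : |s| < δ := by simpa using hsδ
    have : 0 < |s| := abs_pos.2 hs
    rw [h0, norm_div, norm_pow, Real.norm_eq_abs, Real.norm_eq_abs, div_le_iff₀ (by positivity)]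
    have hsum := abs_add_le (f s) (f (-s))
    have hneg := hf (-s) (by simpa using hs')
    rw [abs_neg] at hneg
    rw [mul_zero, sub_zero]
    nlinarith [hf s hs']
  · exact tendsto_nhdsWithin_of_tendsto_nhds
      ((by fun_prop : Continuous fun s : ℝ => 2 * C * |s|).tendsto' 0 0 (by simp))

end HasSymmSecondDeriv

/-- The free flow `(t, x, v) ↦ (t + s, x + s v, v)` of the transport field `∂_t + v · ∇_x`. -/
def freeFlow (z : Z d) (s : ℝ) : Z d := (z.1 + s, z.2.1 + s • z.2.2, z.2.2)

/-- The point `(t, x, v + s e_i)`. -/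
def velShift (z : Z d) (i : Fin d) (s : ℝ) : Z d :=
  (z.1, z.2.1, z.2.2 + s • EuclideanSpace.single i 1)

/-- `HasKolmogorovAt w ℓ z` says that `(∂_t + v · ∇_x - Δ_v) w = ℓ` at `z` in a weak pointwise
sense: the transport derivative is taken backwards along the free flow, and `Δ_v` is computed from
symmetric second differences. It needs no partial derivatives off `z` and is preserved by adding a
function that is `O(r ^ 3)` on kinetic cylinders at `z`. -/
def HasKolmogorovAt (w : Z d → ℝ) (ℓ : ℝ) (z : Z d) : Prop :=
  ∃ (b : ℝ) (m : Fin d → ℝ), HasDerivWithinAt (fun s => w (freeFlow z s)) b (Set.Iic 0) 0 ∧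
    (∀ i, HasSymmSecondDeriv (fun s => w (velShift z i s)) (m i)) ∧ ℓ = b - ∑ i, m i

lemma freeFlow_zero (z : Z d) : freeFlow z 0 = z := by simp [freeFlow]

lemma velShift_zero (z : Z d) (i : Fin d) : velShift z i 0 = z := by simp [velShift]

lemma mem_kCyl_self {r : ℝ} (hr : 0 < r) (z : Z d) : z ∈ kCyl r z :=
  ⟨by nlinarith [sq_pos_of_pos hr], le_rfl, by simpa using pow_pos hr 3, by simpa⟩

lemma eq_zero_of_abs_le_cube {x C δ : ℝ} (hδ : 0 < δ)
    (h : ∀ l, 0 < l → l ≤ δ → |x| ≤ C * l ^ 3) : x = 0 := by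
  have hlim : Tendsto (fun l : ℝ => C * l ^ 3) (𝓝[>] 0) (𝓝 0) :=
    tendsto_nhdsWithin_of_tendsto_nhds
      ((by fun_prop : Continuous fun l : ℝ => C * l ^ 3).tendsto' 0 0 (by simp))
  refine abs_nonpos_iff.1 (ge_of_tendsto hlim ?_)
  filter_upwards [Ioc_mem_nhdsGT hδ] with l hl
  exact h l hl.1 hl.2

namespace HasKolmogorovAt

variable {w w' : Z d → ℝ} {z : Z d} {ℓ ℓ' : ℝ}

lemma add (h : HasKolmogorovAt w ℓ z) (h' : HasKolmogorovAt w' ℓ' z) :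
    HasKolmogorovAt (fun z => w z + w' z) (ℓ + ℓ') z := by
  obtain ⟨b, m, hb, hm, rfl⟩ := h
  obtain ⟨b', m', hb', hm', rfl⟩ := h'
  refine ⟨b + b', fun i => m i + m' i, hb.add hb', fun i => (hm i).add (hm' i), ?_⟩
  rw [Finset.sum_add_distrib]
  ring

lemma const_mul (c : ℝ) (h : HasKolmogorovAt w ℓ z) :
    HasKolmogorovAt (fun z => c * w z) (c * ℓ) z := by
  obtain ⟨b, m, hb, hm, rfl⟩ := h
  refine ⟨c * b, fun i => c * m i, hb.const_mul c, fun i => (hm i).const_mul c, ?_⟩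
  rw [← Finset.mul_sum, mul_sub]

lemma neg (h : HasKolmogorovAt w ℓ z) : HasKolmogorovAt (fun z => -w z) (-ℓ) z := by
  simpa using h.const_mul (-1)

lemma sub (h : HasKolmogorovAt w ℓ z) (h' : HasKolmogorovAt w' ℓ' z) :
    HasKolmogorovAt (fun z => w z - w' z) (ℓ - ℓ') z := by
  simpa only [sub_eq_add_neg] using h.add h'.neg

lemma nonneg_of_forall_le (h : HasKolmogorovAt w ℓ z) {t₀ : ℝ} (ht₀ : t₀ < z.1)
    (hmax : ∀ z', t₀ ≤ z'.1 → z'.1 ≤ z.1 → w z' ≤ w z) : 0 ≤ ℓ := by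
  obtain ⟨b, m, hb, hm, rfl⟩ := h
  have hm_nonpos (i : Fin d) : m i ≤ 0 := (hm i).nonpos_of_forall_le fun s => by
    rw [velShift_zero]
    exact hmax (velShift z i s) ht₀.le le_rfl
  have hb_nonneg : 0 ≤ b := by
    have hslope := (hasDerivWithinAt_iff_tendsto_slope' Set.self_notMem_Iio).1
      (hb.mono Set.Iio_subset_Iic_self)
    refine ge_of_tendsto hslope ?_
    filter_upwards [self_mem_nhdsWithin, nhdsWithin_le_nhds (Ioi_mem_nhds (sub_neg.2 ht₀))]
      with s (hs : s < 0) (hs' : t₀ - z.1 < s)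
    rw [slope_def_field, freeFlow_zero, sub_zero]
    exact div_nonneg_of_nonpos (sub_nonpos.2 <| hmax (freeFlow z s)
      (by dsimp only [freeFlow]; linarith) (by dsimp only [freeFlow]; linarith)) hs.le
  linarith [Finset.sum_nonpos fun i (_ : i ∈ Finset.univ) => hm_nonpos i]

lemma zero_of_abs_le_cube {C δ : ℝ} (hδ : 0 < δ)
    (hw : ∀ l, 0 < l → l ≤ δ → ∀ z' ∈ kCyl l z, |w z'| ≤ C * l ^ 3) : HasKolmogorovAt w 0 z := by
  have hwz : w z = 0 :=
    eq_zero_of_abs_le_cube hδ fun l hl hlδ => hw l hl hlδ z (mem_kCyl_self hl z)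
  refine ⟨0, 0, ?_, fun i => ?_, by simp⟩
  · rw [← hasDerivWithinAt_sdiff_singleton, Set.Iic_sdiff_right,
      hasDerivWithinAt_iff_tendsto_slope' Set.self_notMem_Iio]
    refine squeeze_zero_norm' (a := fun s => 8 * C * √(-s)) ?_ ?_
    · filter_upwards [self_mem_nhdsWithin,
        nhdsWithin_le_nhds (Ioi_mem_nhds (neg_neg_of_pos (pow_pos (half_pos hδ) 2)))]
        with s (hs : s < 0) (hsδ : -(δ / 2) ^ 2 < s)
      have hsqrt : 0 < √(-s) := Real.sqrt_pos.2 (neg_pos.2 hs)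
      have hsq : √(-s) ^ 2 = -s := Real.sq_sqrt (by linarith)
      have hl : 2 * √(-s) ≤ δ := by
        linarith [Real.sqrt_le_iff.2 ⟨(by positivity : 0 ≤ δ / 2), (neg_lt.1 hsδ).le⟩]
      have hbound := hw (2 * √(-s)) (by positivity) hl (freeFlow z s)
        ⟨by dsimp only [freeFlow]; nlinarith, by dsimp only [freeFlow]; linarith,
          by simp [freeFlow, hsqrt], by simp [freeFlow, hsqrt]⟩
      rw [slope_def_field, freeFlow_zero, hwz, sub_zero, sub_zero, norm_div, Real.norm_eq_abs,
        Real.norm_of_nonpos hs.le, div_le_iff₀ (neg_pos.2 hs)]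
      calc |w (freeFlow z s)| ≤ C * (2 * √(-s)) ^ 3 := hbound
        _ = 8 * C * √(-s) * √(-s) ^ 2 := by ring
        _ = 8 * C * √(-s) * -s := by rw [hsq]
    · exact tendsto_nhdsWithin_of_tendsto_nhds
        ((by fun_prop : Continuous fun s : ℝ => 8 * C * √(-s)).tendsto' 0 0 (by simp))
  · refine HasSymmSecondDeriv.zero_of_abs_le_cube (C := 8 * C) (half_pos hδ) fun s hs => ?_
    rcases eq_or_ne s 0 with rfl | hs0
    · simp [velShift_zero, hwz]
    have hpos : 0 < |s| := abs_pos.2 hs0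
    have hbound := hw (2 * |s|) (by positivity) (by linarith) (velShift z i s)
      ⟨by dsimp only [velShift]; nlinarith, le_rfl, by simp [velShift, hpos],
        by simp [velShift, norm_smul, hpos]⟩
    linarith

end HasKolmogorovAt

lemma hasDerivAt_of_comp_const_add {f : ℝ → ℝ} {f' x : ℝ}
    (h : HasDerivAt (fun s => f (x + s)) f' 0) : HasDerivAt f f' x := by
  rw [← sub_self x] at h
  simpa using h.comp_sub_const x x

lemma hasDerivAt_along_line {f f₁ f₂ : ℝ → ℝ → ℝ} (c x : ℝ)
    (h₁ : ∀ s u, HasDerivAt (fun s => f s u) (f₁ s u) s)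
    (h₂ : ∀ s u, HasDerivAt (fun u => f s u) (f₂ s u) u)
    (c₁ : Continuous fun p : ℝ × ℝ => f₁ p.1 p.2) (c₂ : Continuous fun p : ℝ × ℝ => f₂ p.1 p.2) :
    HasDerivAt (fun s => f s (s * c)) (f₁ x (x * c) + c * f₂ x (x * c)) x := by
  have hf := hasStrictFDerivAt_uncurry_coprod (𝕜 := ℝ) (u := (x, x * c)) (f := f)
    (f₁ := fun s u => .toSpanSingleton ℝ (f₁ s u)) (f₂ := fun s u => .toSpanSingleton ℝ (f₂ s u))
    (Eventually.of_forall fun p => (h₁ p.1 p.2).hasFDerivAt)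
    (Eventually.of_forall fun p => (h₂ p.1 p.2).hasFDerivAt)
    (ContinuousLinearMap.toSpanSingletonCLE.continuous.comp c₁).continuousAt
    (ContinuousLinearMap.toSpanSingletonCLE.continuous.comp c₂).continuousAt
  simpa [Function.HasUncurry.uncurry, Function.comp_def] using
    HasFDerivAt.comp_hasDerivAt (f := fun s => (s, s * c)) x hf.hasFDerivAt
      ((hasDerivAt_id x).prodMk ((hasDerivAt_id x).mul_const c))

namespace KinReg

variable {g : Z d → ℝ}

lemma hasDerivAt_px (hg : KinReg g Set.univ) (z : Z d) (i : Fin d) (u : ℝ) :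
    HasDerivAt (fun u : ℝ => g (z.1, z.2.1 + u • EuclideanSpace.single i (1 : ℝ), z.2.2))
      (px g i (z.1, z.2.1 + u • EuclideanSpace.single i (1 : ℝ), z.2.2)) u := by
  have h := (hg.dx (z.1, z.2.1 + u • EuclideanSpace.single i (1 : ℝ), z.2.2)
    (Set.mem_univ _) i).hasDerivAt
  refine hasDerivAt_of_comp_const_add (h.congr_of_eventuallyEq (Eventually.of_forall fun u' => ?_))
  simp only [add_smul, add_assoc]

lemma hasDerivAt_pv (hg : KinReg g Set.univ) (z : Z d) (i : Fin d) (s : ℝ) :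
    HasDerivAt (fun s => g (velShift z i s)) (pv g i (velShift z i s)) s := by
  have h := (hg.dv (velShift z i s) (Set.mem_univ _) i).hasDerivAt
  refine hasDerivAt_of_comp_const_add (h.congr_of_eventuallyEq (Eventually.of_forall fun s' => ?_))
  simp only [velShift, add_smul, add_assoc]

lemma hasDerivAt_partial_transport (hg : KinReg g Set.univ) (c : Fin d → ℝ) (A : Finset (Fin d))
    (z : Z d) :
    HasDerivAt
      (fun s => g (z.1 + s, z.2.1 + s • ∑ i ∈ A, c i • EuclideanSpace.single i (1 : ℝ), z.2.2))
      (pt g z + ∑ i ∈ A, c i * px g i z) 0 := by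
  induction A using Finset.induction_on generalizing z with
  | empty =>
    have h := (hg.dt z (Set.mem_univ _)).hasDerivAt
    rw [← add_zero z.1] at h
    simpa [pt] using h.comp_const_add z.1 0
  | insert j A hj ih =>
    set V : E d := ∑ i ∈ A, c i • EuclideanSpace.single i (1 : ℝ)
    let shift (s u : ℝ) : Z d :=
      (z.1 + s, z.2.1 + s • V + u • EuclideanSpace.single j (1 : ℝ), z.2.2)
    have hshift : Continuous fun p : ℝ × ℝ => shift p.1 p.2 := by fun_prop
    have h₁ (s u : ℝ) : HasDerivAt (fun s => g (shift s u))
        (pt g (shift s u) + ∑ i ∈ A, c i * px g i (shift s u)) s := by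
      refine hasDerivAt_of_comp_const_add ((ih (shift s u)).congr_of_eventuallyEq
        (Eventually.of_forall fun s' => ?_))
      simp only [shift, add_smul, ← add_assoc, add_right_comm _ (u • _)]
    have h₂ (s u : ℝ) : HasDerivAt (fun u => g (shift s u)) (px g j (shift s u)) u :=
      hg.hasDerivAt_px (z.1 + s, z.2.1 + s • V, z.2.2) j u
    have hpx (i : Fin d) : Continuous fun p : ℝ × ℝ => px g i (shift p.1 p.2) :=
      (continuousOn_univ.1 (hg.pxc i)).comp hshift
    have hpt : Continuous fun p : ℝ × ℝ => pt g (shift p.1 p.2) :=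
      (continuousOn_univ.1 hg.ptc).comp hshift
    refine ((hasDerivAt_along_line (c j) 0 h₁ h₂ (by fun_prop) (hpx j)).congr_deriv
      ?_).congr_of_eventuallyEq (Eventually.of_forall fun s => ?_)
    · simp only [shift, zero_mul, zero_smul, add_zero, Finset.sum_insert hj]
      ring
    · simp only [shift, Finset.sum_insert hj, smul_add, smul_smul, add_assoc, V]
      rw [add_comm (s • _)]

lemma hasKolmogorovAt (hg : KinReg g Set.univ) (z : Z d) :
    HasKolmogorovAt g (Yop g z - ∑ i, pvv g i i z) z := by
  refine ⟨Yop g z, fun i => pvv g i i z, ?_, fun i => ?_, rfl⟩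
  · have hsum : (∑ i, z.2.2 i • EuclideanSpace.single i (1 : ℝ) : E d) = z.2.2 := by
      simpa using (EuclideanSpace.basisFun (Fin d) ℝ).sum_repr z.2.2
    have h := hg.hasDerivAt_partial_transport z.2.2 Finset.univ z
    rw [hsum] at h
    exact h.hasDerivWithinAt
  · refine .of_hasDerivAt (hg.hasDerivAt_pv z i) ?_
    simpa [pvv, pv, velShift] using (hg.dvv z (Set.mem_univ _) i i).hasDerivAt

end KinReg

/-- The kinetic change of variables: the dilation `(t, x, v) ↦ (ρ² t, ρ³ x, ρ v)` followed by the
Galilean translation taking `0` to `z₀`. It maps `kCyl r 0` onto `kCyl (ρ * r) z₀`. -/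
def kinMap (z₀ : Z d) (ρ : ℝ) (ζ : Z d) : Z d :=
  (z₀.1 + ρ ^ 2 * ζ.1, z₀.2.1 + ρ ^ 3 • ζ.2.1 + (ρ ^ 2 * ζ.1) • z₀.2.2, z₀.2.2 + ρ • ζ.2.2)

section kinMap

variable (z₀ z : Z d) (ρ : ℝ)

@[fun_prop]
lemma continuous_kinMap : Continuous (kinMap z₀ ρ) := by
  unfold kinMap
  fun_prop

lemma kinMap_zero : kinMap z₀ ρ 0 = z₀ := by simp [kinMap]

lemma kinMap_freeFlow (s : ℝ) :
    kinMap z₀ ρ (freeFlow z s) = freeFlow (kinMap z₀ ρ z) (ρ ^ 2 * s) := by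
  simp only [kinMap, freeFlow, Prod.mk.injEq, and_true]
  exact ⟨by ring, by module⟩

lemma kinMap_velShift (i : Fin d) (s : ℝ) :
    kinMap z₀ ρ (velShift z i s) = velShift (kinMap z₀ ρ z) i (ρ * s) := by
  simp only [kinMap, velShift, smul_add, smul_smul, add_assoc]

variable {ρ}

lemma exists_kinMap_inverse (hρ : ρ ≠ 0) :
    ∃ z₁ : Z d, Function.LeftInverse (kinMap z₁ ρ⁻¹) (kinMap z₀ ρ) ∧
      Function.RightInverse (kinMap z₁ ρ⁻¹) (kinMap z₀ ρ) := by
  refine ⟨(-(ρ⁻¹ ^ 2 * z₀.1), ρ⁻¹ ^ 3 • (z₀.1 • z₀.2.2 - z₀.2.1), -(ρ⁻¹ • z₀.2.2)),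
    fun ζ => ?_, fun ζ => ?_⟩ <;>
  · refine Prod.ext ?_ (Prod.ext ?_ ?_) <;> simp only [kinMap]
    · field_simp
      ring
    · match_scalars <;> grind
    · match_scalars <;> grind

lemma kinMap_mem_kCyl_iff (hρ : 0 < ρ) (r : ℝ) :
    kinMap z₀ ρ z ∈ kCyl (ρ * r) z₀ ↔ z ∈ kCyl r 0 := by
  have hx : z₀.2.1 + ρ ^ 3 • z.2.1 + (ρ ^ 2 * z.1) • z₀.2.2 - z₀.2.1 - (ρ ^ 2 * z.1) • z₀.2.2 =
      ρ ^ 3 • z.2.1 := by module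
  have ht : z₀.1 - ρ ^ 2 * r ^ 2 < z₀.1 + ρ ^ 2 * z.1 ↔ 0 - r ^ 2 < z.1 := by
    rw [sub_eq_add_neg, add_lt_add_iff_left, ← mul_neg, zero_sub,
      mul_lt_mul_iff_right₀ (by positivity)]
  have ht₀ : z₀.1 + ρ ^ 2 * z.1 ≤ z₀.1 ↔ z.1 ≤ 0 := by
    rw [add_le_iff_nonpos_right, mul_nonpos_iff_pos_imp_nonpos]
    simp [hρ, hρ.le]
  simp only [kCyl, kinMap, Set.mem_ofPred_eq, add_sub_cancel_left, hx, ht, ht₀, Prod.fst_zero,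
    Prod.snd_zero, smul_zero, sub_zero, norm_smul, norm_pow, Real.norm_of_nonneg hρ.le, mul_pow,
    mul_lt_mul_iff_right₀ hρ, mul_lt_mul_iff_right₀ (pow_pos hρ 3)]

end kinMap

lemma mem_kCyl_zero {r : ℝ} {z : Z d} :
    z ∈ kCyl r 0 ↔ -r ^ 2 < z.1 ∧ z.1 ≤ 0 ∧ ‖z.2.1‖ < r ^ 3 ∧ ‖z.2.2‖ < r := by
  simp [kCyl]

lemma kCyl_zero_mono {r r' : ℝ} (hr : 0 ≤ r) (h : r ≤ r') : kCyl r (0 : Z d) ⊆ kCyl r' 0 := by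
  intro z hz
  rw [mem_kCyl_zero] at hz ⊢
  have h2 : r ^ 2 ≤ r' ^ 2 := by gcongr
  have h3 : r ^ 3 ≤ r' ^ 3 := by gcongr
  exact ⟨by linarith, hz.2.1, by linarith, by linarith⟩

namespace HasKolmogorovAt

variable {w : Z d → ℝ} {z₀ z : Z d} {ℓ ρ : ℝ}

lemma comp_kinMap (hρ : ρ ≠ 0) (h : HasKolmogorovAt w ℓ (kinMap z₀ ρ z)) :
    HasKolmogorovAt (fun ζ => w (kinMap z₀ ρ ζ)) (ρ ^ 2 * ℓ) z := by
  obtain ⟨b, m, hb, hm, rfl⟩ := h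
  refine ⟨ρ ^ 2 * b, fun i => ρ ^ 2 * m i, ?_, fun i => ?_, ?_⟩
  · simp only [kinMap_freeFlow]
    rw [← mul_zero (ρ ^ 2)] at hb
    have hlin : HasDerivWithinAt (fun s => ρ ^ 2 * s) (ρ ^ 2) (Set.Iic 0) 0 := by
      simpa using (hasDerivWithinAt_id 0 _).const_mul (ρ ^ 2)
    exact hb.scomp 0 hlin fun s hs => by
      simpa using mul_nonpos_of_nonneg_of_nonpos (sq_nonneg ρ) hs
  · simpa only [kinMap_velShift] using (hm i).comp_mul_left hρ
  · rw [mul_sub, Finset.mul_sum]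

lemma of_comp_kinMap (hρ : ρ ≠ 0) (h : HasKolmogorovAt (fun ζ => w (kinMap z₀ ρ ζ)) ℓ z) :
    HasKolmogorovAt w (ρ⁻¹ ^ 2 * ℓ) (kinMap z₀ ρ z) := by
  obtain ⟨z₁, hleft, hright⟩ := exists_kinMap_inverse z₀ hρ
  rw [← hleft z] at h
  simpa only [hright _] using h.comp_kinMap (inv_ne_zero hρ)

end HasKolmogorovAt

/-- The space of polynomials of kinetic degree at most `2`. -/
def kinPoly (d : ℕ) : Submodule ℝ (Z d → ℝ) where
  carrier := {p | ∃ a b q M, p = kpoly a b q M}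
  zero_mem' := ⟨0, 0, 0, 0, by ext; simp [kpoly]⟩
  add_mem' := by
    rintro _ _ ⟨a, b, q, M, rfl⟩ ⟨a', b', q', M', rfl⟩
    refine ⟨a + a', b + b', q + q', M + M', funext fun z => ?_⟩
    simp only [kpoly, Pi.add_apply, Matrix.add_apply, add_mul, Finset.sum_add_distrib]
    ring
  smul_mem' := by
    rintro c _ ⟨a, b, q, M, rfl⟩
    refine ⟨c * a, c * b, c • q, c • M, funext fun z => ?_⟩
    simp only [kpoly, Pi.smul_apply, Matrix.smul_apply, smul_eq_mul, mul_assoc, mul_add,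
      Finset.mul_sum, mul_left_comm c]

lemma kpoly_smul_vel (a b : ℝ) (q : Fin d → ℝ) (M : Matrix (Fin d) (Fin d) ℝ) (t c : ℝ)
    (x v : E d) : kpoly a b q M (t, x, c • v) =
      a + b * t + c * ∑ i, q i * v i + c ^ 2 * (1 / 2 * ∑ i, ∑ j, M i j * v i * v j) := by
  simp only [kpoly, PiLp.smul_apply, smul_eq_mul, Finset.mul_sum]
  congr 1
  · congr 1
    exact Finset.sum_congr rfl fun i _ => by ring
  · exact Finset.sum_congr rfl fun i _ => Finset.sum_congr rfl fun j _ => by ring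

lemma hasKolmogorovAt_kpoly (a b : ℝ) (q : Fin d → ℝ) (M : Matrix (Fin d) (Fin d) ℝ) (z : Z d) :
    HasKolmogorovAt (kpoly a b q M) (b - M.trace) z := by
  refine ⟨b, fun i => M i i, ?_, fun i => ?_, rfl⟩
  · have h : HasDerivAt (fun s => kpoly a b q M z + b * s) b 0 := by
      simpa using ((hasDerivAt_id (0 : ℝ)).const_mul b).const_add (kpoly a b q M z)
    refine (h.congr_of_eventuallyEq (Eventually.of_forall fun s => ?_)).hasDerivWithinAt
    simp only [kpoly, freeFlow]
    ring
  · refine tendsto_const_nhds.congr' ?_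
    filter_upwards [self_mem_nhdsWithin] with s (hs : s ≠ 0)
    have hdiff : kpoly a b q M (velShift z i s) + kpoly a b q M (velShift z i (-s)) -
        2 * kpoly a b q M (velShift z i 0) = M i i * s ^ 2 := by
      have hM : ∑ k, ∑ j, M k j * (s • EuclideanSpace.single i 1 : E d) k *
          (s • EuclideanSpace.single i 1 : E d) j = M i i * s ^ 2 := by
        simp [PiLp.single_apply, sq, mul_assoc]
      rw [← hM]
      simp only [kpoly, velShift, zero_smul, add_zero, neg_smul, PiLp.add_apply, PiLp.neg_apply,
        mul_add, add_mul, Finset.sum_add_distrib, mul_neg, neg_mul, Finset.sum_neg_distrib]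
      ring
    rw [hdiff, mul_div_cancel_right₀ _ (pow_ne_zero 2 hs)]

namespace kinPoly

variable {p : Z d → ℝ}

lemma const_mem (c : ℝ) : (fun _ => c) ∈ kinPoly d := ⟨c, 0, 0, 0, by ext; simp [kpoly]⟩

lemma time_mem : (fun z => z.1) ∈ kinPoly d := ⟨0, 1, 0, 0, by ext; simp [kpoly]⟩

lemma vel_mem (i : Fin d) : (fun z => z.2.2 i) ∈ kinPoly d :=
  ⟨0, 0, Pi.single i 1, 0, by ext; simp [kpoly, Pi.single_apply]⟩

lemma vel_mul_vel_mem (i j : Fin d) : (fun z => z.2.2 i * z.2.2 j) ∈ kinPoly d :=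
  ⟨0, 0, 0, Matrix.single i j 2, by ext; simp [kpoly, Matrix.single_apply, ite_and, mul_assoc]⟩

lemma continuous (hp : p ∈ kinPoly d) : Continuous p := by
  obtain ⟨a, b, q, M, rfl⟩ := hp
  unfold kpoly
  fun_prop

lemma exists_hasKolmogorovAt (hp : p ∈ kinPoly d) : ∃ c, ∀ z, HasKolmogorovAt p c z := by
  obtain ⟨a, b, q, M, rfl⟩ := hp
  exact ⟨_, hasKolmogorovAt_kpoly a b q M⟩

lemma comp_kinMap (hp : p ∈ kinPoly d) (z₀ : Z d) (ρ : ℝ) :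
    (fun ζ => p (kinMap z₀ ρ ζ)) ∈ kinPoly d := by
  obtain ⟨a, b, q, M, rfl⟩ := hp
  have hvel (i : Fin d) : (fun ζ : Z d => z₀.2.2 i + ρ * ζ.2.2 i) ∈ kinPoly d :=
    add_mem (const_mem _) (Submodule.smul_mem _ ρ (vel_mem i))
  have hvel₂ (i j : Fin d) :
      (fun ζ : Z d => (z₀.2.2 i + ρ * ζ.2.2 i) * (z₀.2.2 j + ρ * ζ.2.2 j)) ∈ kinPoly d := by
    convert add_mem (add_mem (const_mem (z₀.2.2 i * z₀.2.2 j))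
      (Submodule.smul_mem _ (z₀.2.2 i * ρ) (vel_mem j)))
      (add_mem (Submodule.smul_mem _ (ρ * z₀.2.2 j) (vel_mem i))
        (Submodule.smul_mem _ (ρ ^ 2) (vel_mul_vel_mem i j))) using 1
    ext ζ
    simp only [Pi.add_apply, Pi.smul_apply, smul_eq_mul]
    ring
  convert add_mem (add_mem (add_mem (const_mem (a + b * z₀.1))
    (Submodule.smul_mem _ (b * ρ ^ 2) time_mem))
    (sum_mem fun i (_ : i ∈ Finset.univ) => Submodule.smul_mem _ (q i) (hvel i)))
    (Submodule.smul_mem _ (1 / 2) (sum_mem fun i (_ : i ∈ Finset.univ) =>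
      sum_mem fun j (_ : j ∈ Finset.univ) => Submodule.smul_mem _ (M i j) (hvel₂ i j))) using 1
  ext ζ
  simp only [kpoly, kinMap, PiLp.add_apply, PiLp.smul_apply, smul_eq_mul, Pi.add_apply,
    Pi.smul_apply, Finset.sum_apply, mul_assoc]
  ring

/-- Doubling the cylinder only costs a constant, by writing `p (t, x, v)` through values of `p`
at points with half the velocity and a quarter of the time. -/
lemma abs_le_of_kCyl_two_mul (hp : p ∈ kinPoly d) {r A : ℝ} (hr : 0 < r)
    (h : ∀ z ∈ kCyl r 0, |p z| ≤ A) : ∀ z ∈ kCyl (2 * r) 0, |p z| ≤ 7 * A := by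
  rintro ⟨t, x, v⟩ hz
  obtain ⟨ht, ht₀, -, hv⟩ := mem_kCyl_zero.1 hz
  dsimp only at ht ht₀ hv
  have hhalf (c : ℝ) (hc : |c| = 1 / 2) : |p (t / 4, 0, c • v)| ≤ A := by
    refine h _ (mem_kCyl_zero.2 ⟨by dsimp only; nlinarith, by dsimp only; linarith, ?_, ?_⟩)
    · simpa using pow_pos hr 3
    · rw [norm_smul, Real.norm_eq_abs, hc]
      linarith
  have hzero : |p 0| ≤ A := h 0 (mem_kCyl_self hr 0)
  have hdouble : p (t, x, v) =
      3 * p (t / 4, 0, (1 / 2 : ℝ) • v) - 3 * p 0 + p (t / 4, 0, (-1 / 2 : ℝ) • v) := by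
    obtain ⟨a, b, q, M, rfl⟩ := hp
    have h0 := kpoly_smul_vel a b q M 0 0 0 (0 : E d)
    have h1 := kpoly_smul_vel a b q M t 1 x v
    rw [one_smul] at h1
    rw [smul_zero] at h0
    change _ = _ - 3 * kpoly a b q M (0, 0, 0) + _
    rw [h0, h1, kpoly_smul_vel, kpoly_smul_vel]
    ring
  have hpos := abs_le.1 (hhalf (1 / 2) (by norm_num))
  have hneg := abs_le.1 (hhalf (-1 / 2) (by norm_num [abs_div]))
  have hz0 := abs_le.1 hzero
  rw [hdouble, abs_le]
  constructor <;> linarith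

end kinPoly

/-- The quadratic weight `1 + |x|² + |v|²`, in powers of which all growth in `(x, v)` is
measured. -/
def weight (η : E d × E d) : ℝ := 1 + ‖η.1‖ ^ 2 + ‖η.2‖ ^ 2

section weight

variable (η : E d × E d)

lemma one_le_weight : 1 ≤ weight η := by
  unfold weight
  linarith [sq_nonneg ‖η.1‖, sq_nonneg ‖η.2‖]

lemma weight_pos : 0 < weight η := zero_lt_one.trans_le (one_le_weight η)

lemma sq_norm_fst_le_weight : ‖η.1‖ ^ 2 ≤ weight η := by
  unfold weight
  linarith [sq_nonneg ‖η.2‖]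

lemma sq_norm_snd_le_weight : ‖η.2‖ ^ 2 ≤ weight η := by
  unfold weight
  linarith [sq_nonneg ‖η.1‖]

lemma norm_fst_le_weight : ‖η.1‖ ≤ weight η := by
  simp only [weight]
  linarith [sq_nonneg (‖η.1‖ - 1), sq_nonneg ‖η.1‖, sq_nonneg ‖η.2‖]

lemma norm_snd_le_weight : ‖η.2‖ ≤ weight η := by
  simp only [weight]
  linarith [sq_nonneg (‖η.2‖ - 1), sq_nonneg ‖η.1‖, sq_nonneg ‖η.2‖]

lemma abs_inner_le_weight : |inner ℝ η.2 η.1| ≤ weight η := by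
  refine (abs_real_inner_le_norm _ _).trans ?_
  simp only [weight]
  linarith [sq_nonneg (‖η.2‖ - ‖η.1‖), sq_nonneg ‖η.1‖, sq_nonneg ‖η.2‖]

lemma neg_weight_le_two_inner : -weight η ≤ 2 * inner ℝ η.1 η.2 := by
  unfold weight
  linarith [norm_add_sq_real η.1 η.2, sq_nonneg ‖η.1 + η.2‖]

@[fun_prop]
lemma continuous_weight : Continuous (weight (d := d)) := by
  unfold weight
  fun_prop

lemma isCompact_weight_le (R : ℝ) : IsCompact {η : E d × E d | weight η ≤ R} := by
  refine (isCompact_closedBall 0 (R + 1)).of_isClosed_subset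
    (isClosed_le continuous_weight continuous_const) fun η (hη : weight η ≤ R) => ?_
  rw [mem_closedBall_zero_iff, Prod.norm_def, max_le_iff]
  exact ⟨by nlinarith [sq_norm_fst_le_weight η, sq_nonneg (‖η.1‖ - 1)],
    by nlinarith [sq_norm_snd_le_weight η, sq_nonneg (‖η.2‖ - 1)]⟩

end weight

lemma abs_sub_le_of_dyadic {g : Z d → ℝ} {p : ℕ → Z d → ℝ} {N : ℝ} (hp : ∀ k, p k ∈ kinPoly d)
    (h : ∀ k, ∀ z ∈ kCyl (2 ^ k) 0, |g z - p k z| ≤ N * 8 ^ k) (k : ℕ) :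
    ∀ z ∈ kCyl (2 ^ k) 0, |g z - p 0 z| ≤ 8 * N * 16 ^ k := by
  have hN : 0 ≤ N := by simpa using (abs_nonneg _).trans (h 0 0 (mem_kCyl_self (by simp) 0))
  have hpow (k : ℕ) : N * 8 ^ k ≤ N * 16 ^ k := by gcongr; norm_num
  have hdiff : ∀ z ∈ kCyl (2 ^ k) 0, |(p k - p 0) z| ≤ 7 * N * 16 ^ k := by
    induction k with
    | zero =>
      intro z _
      simpa using hN
    | succ k ih =>
      have hstep : ∀ z ∈ kCyl (2 ^ k) 0, |(p (k + 1) - p 0) z| ≤ 16 * (N * 16 ^ k) := by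
        intro z hz
        have hz' : z ∈ kCyl (2 ^ (k + 1)) 0 :=
          kCyl_zero_mono (by positivity) (pow_le_pow_right₀ one_le_two k.le_succ) hz
        have h₀ := abs_le.1 (ih z hz)
        have h₁ := abs_le.1 (h k z hz)
        have h₂ := abs_le.1 (h (k + 1) z hz')
        rw [pow_succ (8 : ℝ)] at h₂
        have := hpow k
        simp only [Pi.sub_apply] at h₀ ⊢
        rw [abs_le]
        constructor <;> linarith
      rw [pow_succ' (2 : ℝ)]
      intro z hz
      refine (kinPoly.abs_le_of_kCyl_two_mul (sub_mem (hp _) (hp 0)) (by positivity) hstep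
        z hz).trans_eq ?_
      ring
  intro z hz
  have h₁ := abs_le.1 (h k z hz)
  have h₂ := abs_le.1 (hdiff z hz)
  have := hpow k
  simp only [Pi.sub_apply] at h₂
  rw [abs_le]
  constructor <;> linarith

lemma exists_dyadic_mem_kCyl {z : Z d} (ht : -1 ≤ z.1) (ht₀ : z.1 ≤ 0) :
    ∃ k : ℕ, z ∈ kCyl (2 ^ k) 0 ∧ (16 : ℝ) ^ k ≤ 144 * weight z.2 ^ 2 := by
  have hx := norm_nonneg z.2.1
  have hv := norm_nonneg z.2.2
  obtain ⟨n, hn, hn'⟩ := exists_nat_pow_near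
    (show (1 : ℝ) ≤ 1 + ‖z.2.1‖ + ‖z.2.2‖ by linarith) one_lt_two
  have : 2 ≤ (2 : ℝ) ^ (n + 1) := le_self_pow₀ one_le_two n.succ_ne_zero
  refine ⟨n + 1, mem_kCyl_zero.2 ⟨by nlinarith, ht₀, ?_, by linarith⟩, ?_⟩
  · linarith [le_self_pow₀ (by linarith : 1 ≤ (2 : ℝ) ^ (n + 1)) three_ne_zero]
  · have hweight : ((2 : ℝ) ^ n) ^ 2 ≤ 3 * weight z.2 := by
      refine (pow_le_pow_left₀ (by positivity) hn 2).trans ?_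
      unfold weight
      nlinarith [sq_nonneg (‖z.2.1‖ - ‖z.2.2‖), sq_nonneg (‖z.2.1‖ - 1), sq_nonneg (‖z.2.2‖ - 1)]
    calc (16 : ℝ) ^ (n + 1) = 16 * (((2 : ℝ) ^ n) ^ 2) ^ 2 := by
          rw [← pow_mul, ← pow_mul, pow_succ', show (16 : ℝ) = 2 ^ 4 by norm_num, ← pow_mul]
          ring
      _ ≤ 16 * (3 * weight z.2) ^ 2 := by gcongr
      _ = 144 * weight z.2 ^ 2 := by ring

lemma exists_kinPoly_abs_sub_le_weight {g : Z d → ℝ} {N : ℝ}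
    (h : ∀ r, 1 ≤ r → ∃ p ∈ kinPoly d, ∀ z ∈ kCyl r 0, |g z - p z| ≤ N * r ^ 3) :
    ∃ p ∈ kinPoly d, ∀ z : Z d, -1 ≤ z.1 → z.1 ≤ 0 →
      |g z - p z| ≤ 1152 * N * weight z.2 ^ 2 := by
  choose p hp hgp using fun k : ℕ => h (2 ^ k) (one_le_pow₀ one_le_two)
  have hgp' (k : ℕ) : ∀ z ∈ kCyl (2 ^ k) 0, |g z - p k z| ≤ N * 8 ^ k := by
    convert hgp k using 4
    rw [← pow_mul, mul_comm k, pow_mul]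
    norm_num
  have hN : 0 ≤ N := by simpa using (abs_nonneg _).trans (hgp' 0 0 (mem_kCyl_self (by simp) 0))
  refine ⟨p 0, hp 0, fun z ht ht₀ => ?_⟩
  obtain ⟨k, hz, hk⟩ := exists_dyadic_mem_kCyl ht ht₀
  calc |g z - p 0 z| ≤ 8 * N * 16 ^ k := abs_sub_le_of_dyadic hp hgp' k z hz
    _ ≤ 8 * N * (144 * weight z.2 ^ 2) := by gcongr
    _ = 1152 * N * weight z.2 ^ 2 := by ring

/-- The exponential rate that makes `barrier k` a supersolution. -/
def barrierRate (d k : ℕ) : ℝ := k + 4 * k ^ 2 + 2 * d * k + 1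

/-- The supersolution `exp (λ (t + 1)) (1 + |x|² + |v|²) ^ k` of the Kolmogorov equation, used to
control solutions on the strip `-1 ≤ t ≤ 0` at spatial infinity. -/
def barrier (k : ℕ) (z : Z d) : ℝ := exp (barrierRate d k * (z.1 + 1)) * weight z.2 ^ k

section barrier

variable (k : ℕ) (z : Z d)

@[fun_prop]
lemma continuous_barrier : Continuous (barrier (d := d) k) := by
  unfold barrier
  fun_prop

lemma barrierRate_nonneg (d : ℕ) : 0 ≤ barrierRate d k := by
  unfold barrierRate
  positivity

lemma barrier_pos : 0 < barrier k z := mul_pos (exp_pos _) (pow_pos (weight_pos _) k)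

variable {z}

lemma weight_pow_le_barrier (hz : -1 ≤ z.1) : weight z.2 ^ k ≤ barrier k z :=
  le_mul_of_one_le_left (pow_pos (weight_pos _) k).le
    (one_le_exp (mul_nonneg (barrierRate_nonneg k d) (by linarith)))

lemma barrier_le (hz : z.1 ≤ 0) : barrier k z ≤ exp (barrierRate d k) * weight z.2 ^ k := by
  have := (pow_pos (weight_pos z.2) k).le
  unfold barrier
  gcongr
  nlinarith [barrierRate_nonneg k d]

lemma hasDerivAt_barrier_freeFlow (z : Z d) :
    HasDerivAt (fun s => barrier k (freeFlow z s)) (exp (barrierRate d k * (z.1 + 1)) *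
      (barrierRate d k * weight z.2 ^ k + k * weight z.2 ^ (k - 1) * (2 * inner ℝ z.2.1 z.2.2)))
      0 := by
  have hweight (s : ℝ) : weight (freeFlow z s).2 =
      weight z.2 + s * (2 * inner ℝ z.2.1 z.2.2) + s ^ 2 * ‖z.2.2‖ ^ 2 := by
    simp only [weight, freeFlow, norm_add_sq_real, norm_smul, inner_smul_right, mul_pow,
      Real.norm_eq_abs, sq_abs]
    ring
  have hquad : HasDerivAt (fun s => weight (freeFlow z s).2) (2 * inner ℝ z.2.1 z.2.2) 0 := by
    simp only [hweight]
    simpa using (((hasDerivAt_id (0 : ℝ)).mul_const (2 * inner ℝ z.2.1 z.2.2)).const_add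
      (weight z.2)).fun_add ((hasDerivAt_pow 2 (0 : ℝ)).mul_const (‖z.2.2‖ ^ 2))
  have hexp := ((((hasDerivAt_id (0 : ℝ)).const_add z.1).add_const 1).const_mul
    (barrierRate d k)).exp
  refine (hexp.mul (hquad.fun_pow k)).congr_deriv ?_
  simp only [id, add_zero, freeFlow_zero]
  ring

lemma hasSymmSecondDeriv_barrier_velShift (z : Z d) (i : Fin d) :
    HasSymmSecondDeriv (fun s => barrier k (velShift z i s)) (exp (barrierRate d k * (z.1 + 1)) *
      (k * (↑(k - 1) * weight z.2 ^ (k - 1 - 1) * (4 * z.2.2 i ^ 2) +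
        2 * weight z.2 ^ (k - 1)))) := by
  have hweight (s : ℝ) : weight (velShift z i s).2 = weight z.2 + 2 * z.2.2 i * s + s ^ 2 := by
    simp only [weight, velShift, norm_add_sq_real, norm_smul, inner_smul_right, mul_pow,
      Real.norm_eq_abs, sq_abs, EuclideanSpace.inner_single_right]
    simp
    ring
  have hquad (s : ℝ) :
      HasDerivAt (fun s => weight (velShift z i s).2) (2 * z.2.2 i + 2 * s) s := by
    simp only [hweight]
    simpa using (((hasDerivAt_id s).const_mul (2 * z.2.2 i)).const_add (weight z.2)).fun_add
      (hasDerivAt_pow 2 s)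
  have hlin : HasDerivAt (fun s => 2 * z.2.2 i + 2 * s) 2 (0 : ℝ) := by
    simpa using ((hasDerivAt_id (0 : ℝ)).const_mul 2).const_add (2 * z.2.2 i)
  refine .of_hasDerivAt
    (fun s => ((hquad s).fun_pow k).const_mul (exp (barrierRate d k * (z.1 + 1)))) ?_
  refine (((((hquad 0).fun_pow (k - 1)).const_mul (k : ℝ)).mul hlin).const_mul _).congr_deriv ?_
  simp only [velShift_zero, mul_zero, add_zero]
  ring

lemma exists_barrier_le_hasKolmogorovAt (z : Z d) :
    ∃ ℓ, barrier k z ≤ ℓ ∧ HasKolmogorovAt (barrier k) ℓ z := by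
  refine ⟨_, ?_, _, _, (hasDerivAt_barrier_freeFlow k z).hasDerivWithinAt,
    hasSymmSecondDeriv_barrier_velShift k z, rfl⟩
  have hw := one_le_weight z.2
  rw [← Finset.mul_sum, ← mul_sub, barrier]
  refine mul_le_mul_of_nonneg_left ?_ (exp_pos _).le
  rw [← Finset.mul_sum, Finset.sum_add_distrib, ← Finset.mul_sum, ← Finset.mul_sum,
    ← EuclideanSpace.real_norm_sq_eq, Finset.sum_const, Finset.card_univ, Fintype.card_fin,
    nsmul_eq_mul]
  rcases k with _ | m
  · simp [barrierRate]
  have hinner : -weight z.2 ^ (m + 1) ≤ weight z.2 ^ m * (2 * inner ℝ z.2.1 z.2.2) := by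
    rw [pow_succ, ← mul_neg]
    exact mul_le_mul_of_nonneg_left (neg_weight_le_two_inner _) (by positivity)
  have hvel : m * (weight z.2 ^ (m - 1) * (4 * ‖z.2.2‖ ^ 2)) ≤
      4 * (m + 1) * weight z.2 ^ (m + 1) := by
    have : weight z.2 ^ (m - 1) * ‖z.2.2‖ ^ 2 ≤ weight z.2 ^ (m + 1) :=
      (mul_le_mul_of_nonneg_left (sq_norm_snd_le_weight _) (by positivity)).trans
        (pow_succ (weight z.2) (m - 1) ▸ pow_le_pow_right₀ hw (by omega))
    nlinarith [this, pow_nonneg (weight_pos z.2).le (m + 1)]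
  have hdim : weight z.2 ^ m ≤ weight z.2 ^ (m + 1) := pow_le_pow_right₀ hw m.le_succ
  simp only [barrierRate, Nat.add_sub_cancel]
  push_cast
  have hm : (0 : ℝ) ≤ m + 1 := by positivity
  nlinarith [mul_le_mul_of_nonneg_left hinner hm, mul_le_mul_of_nonneg_left hvel hm,
    mul_le_mul_of_nonneg_left hdim (mul_nonneg (mul_nonneg zero_le_two d.cast_nonneg) hm)]

end barrier

section maximum_principle

variable {w : Z d → ℝ}

lemma nonpos_of_strict_subsolution {t₀ t₁ : ℝ} (hw : Continuous w) {K : Set (Z d)}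
    (hK : IsCompact K) (hout : ∀ z, t₀ ≤ z.1 → z.1 ≤ t₁ → z ∉ K → w z ≤ 0)
    (hinit : ∀ η, w (t₀, η) ≤ 0)
    (hsub : ∀ z, t₀ < z.1 → z.1 ≤ t₁ → ∃ ℓ < 0, HasKolmogorovAt w ℓ z) (z : Z d)
    (hz : t₀ ≤ z.1) (hz₁ : z.1 ≤ t₁) : w z ≤ 0 := by
  by_contra! hpos
  let strip : Set (Z d) := {z | t₀ ≤ z.1 ∧ z.1 ≤ t₁}
  have hstrip : IsClosed strip :=
    (isClosed_le continuous_const continuous_fst).inter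
      (isClosed_le continuous_fst continuous_const)
  have hmem {y : Z d} (hy : y ∈ strip) (hwy : 0 < w y) : y ∈ K ∩ strip :=
    ⟨by_contra fun hyK => (hout y hy.1 hy.2 hyK).not_gt hwy, hy⟩
  obtain ⟨y, ⟨-, hy⟩, hmax⟩ :=
    (hK.inter_right hstrip).exists_isMaxOn ⟨z, hmem ⟨hz, hz₁⟩ hpos⟩ hw.continuousOn
  have hwy : 0 < w y := hpos.trans_le (hmax (hmem ⟨hz, hz₁⟩ hpos))
  have hty : t₀ < y.1 := by
    refine hy.1.lt_of_ne fun ht => (hinit y.2).not_gt ?_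
    rwa [ht]
  obtain ⟨ℓ, hℓ, hwℓ⟩ := hsub y hty hy.2
  refine (hwℓ.nonneg_of_forall_le hty fun y' hy' hy'₁ => ?_).not_gt hℓ
  rcases le_or_gt (w y') 0 with h | h
  · exact h.trans hwy.le
  · exact hmax (hmem ⟨hy', hy'₁.trans hy.2⟩ h)

lemma sub_barrier_sub_barrier_nonpos {K C ε : ℝ} (hK : 0 ≤ K) (hε : 0 < ε) (hw : Continuous w)
    (hsub : ∀ z, -1 < z.1 → z.1 ≤ 0 → ∃ ℓ ≤ K * weight z.2, HasKolmogorovAt w ℓ z)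
    (hinit : ∀ η, w (-1, η) ≤ 0)
    (hgrowth : ∀ z, -1 ≤ z.1 → z.1 ≤ 0 → w z ≤ C * weight z.2 ^ 2) (z : Z d) (hz : -1 ≤ z.1)
    (hz₀ : z.1 ≤ 0) : w z - K * barrier 1 z - ε * barrier 3 z ≤ 0 := by
  refine nonpos_of_strict_subsolution (w := fun z => w z - K * barrier 1 z - ε * barrier 3 z)
    (K := Set.Icc (-1) 0 ×ˢ {η | weight η ≤ C / ε}) (by fun_prop)
    (isCompact_Icc.prod (isCompact_weight_le _)) ?_ (fun η => ?_) ?_ z hz hz₀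
  · intro y hy hy₀ hyK
    have hweight : C / ε < weight y.2 := not_le.1 fun h => hyK ⟨⟨hy, hy₀⟩, h⟩
    have h₁ : 0 ≤ K * barrier 1 y := mul_nonneg hK (barrier_pos 1 y).le
    have h₃ : C * weight y.2 ^ 2 ≤ ε * barrier 3 y := by
      calc C * weight y.2 ^ 2 ≤ ε * weight y.2 * weight y.2 ^ 2 := by
            gcongr
            rw [mul_comm]
            exact ((div_lt_iff₀ hε).1 hweight).le
        _ = ε * weight y.2 ^ 3 := by ring
        _ ≤ ε * barrier 3 y := by
            gcongr
            exact weight_pow_le_barrier 3 hy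
    linarith [hgrowth y hy hy₀]
  · have h₁ : 0 ≤ K * barrier 1 ((-1, η) : Z d) := mul_nonneg hK (barrier_pos 1 _).le
    have h₃ : 0 ≤ ε * barrier 3 ((-1, η) : Z d) := mul_nonneg hε.le (barrier_pos 3 _).le
    linarith [hinit η]
  · intro y hy hy₀
    obtain ⟨ℓ, hℓ, hwℓ⟩ := hsub y hy hy₀
    obtain ⟨ℓ₁, hℓ₁, hb₁⟩ := exists_barrier_le_hasKolmogorovAt 1 y
    obtain ⟨ℓ₃, hℓ₃, hb₃⟩ := exists_barrier_le_hasKolmogorovAt 3 y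
    refine ⟨_, ?_, (hwℓ.sub (hb₁.const_mul K)).sub (hb₃.const_mul ε)⟩
    have h₁ : K * weight y.2 ≤ K * ℓ₁ := by
      gcongr
      simpa using (weight_pow_le_barrier 1 hy.le).trans hℓ₁
    have h₃ : 0 < ε * ℓ₃ := mul_pos hε ((barrier_pos 3 y).trans_le hℓ₃)
    linarith

lemma le_of_subsolution_of_growth {K C : ℝ} (hK : 0 ≤ K) (hw : Continuous w)
    (hsub : ∀ z, -1 < z.1 → z.1 ≤ 0 → ∃ ℓ ≤ K * weight z.2, HasKolmogorovAt w ℓ z)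
    (hinit : ∀ η, w (-1, η) ≤ 0)
    (hgrowth : ∀ z, -1 ≤ z.1 → z.1 ≤ 0 → w z ≤ C * weight z.2 ^ 2) (z : Z d) (hz : -1 ≤ z.1)
    (hz₀ : z.1 ≤ 0) : w z ≤ K * (exp (barrierRate d 1) * weight z.2) := by
  have hle : w z ≤ K * barrier 1 z := by
    refine le_of_forall_pos_le_add fun ε hε => ?_
    have h := sub_barrier_sub_barrier_nonpos hK (div_pos hε (barrier_pos 3 z)) hw hsub hinit hgrowth
      z hz hz₀
    rw [div_mul_cancel₀ _ (barrier_pos 3 z).ne'] at h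
    linarith
  refine hle.trans (mul_le_mul_of_nonneg_left ?_ hK)
  simpa using barrier_le 1 hz₀

end maximum_principle

lemma integrable_exp_neg_mul_weight {c : ℝ} (hc : 0 < c) :
    Integrable fun η : E d × E d => exp (-c * weight η) := by
  have hgauss : Integrable fun v : E d => exp (-c * ‖v‖ ^ 2) := by
    convert (GaussianFourier.integrable_cexp_neg_mul_sq_norm_add (V := E d)
      (b := (c : ℂ)) (by simpa using hc) 0 0).norm using 2
    simp [Complex.norm_exp, ← Complex.ofReal_pow]
  refine ((hgauss.mul_prod hgauss).const_mul (exp (-c))).congr (ae_of_all _ fun η => ?_)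
  simp only [← exp_add, weight]
  ring_nf

lemma integrable_weight_pow_mul_exp {c : ℝ} (hc : 0 < c) (k : ℕ) :
    Integrable fun η : E d × E d => weight η ^ k * exp (-c * weight η) := by
  refine ((integrable_exp_neg_mul_weight (half_pos hc)).const_mul (k.factorial / (c / 2) ^ k)).mono'
    (by fun_prop) (ae_of_all _ fun η => ?_)
  have hw := weight_pos η
  have hpow : weight η ^ k ≤ k.factorial / (c / 2) ^ k * exp (c / 2 * weight η) := by
    have h := pow_div_factorial_le_exp (x := c / 2 * weight η) (by positivity) k
    rw [mul_pow, div_le_iff₀ (by positivity)] at h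
    rw [div_mul_eq_mul_div, le_div_iff₀ (by positivity)]
    linarith
  rw [Real.norm_of_nonneg (by positivity)]
  calc weight η ^ k * exp (-c * weight η)
      ≤ k.factorial / (c / 2) ^ k * exp (c / 2 * weight η) * exp (-c * weight η) := by gcongr
    _ = k.factorial / (c / 2) ^ k * exp (-(c / 2) * weight η) := by
      rw [mul_assoc, ← exp_add]
      ring_nf

/-- The quadratic form in the exponent of the fundamental solution of the Kolmogorov equation at
time one; `η.1` is the displacement from free transport and `η.2` the velocity increment. -/
def kolForm (η : E d × E d) : ℝ := ‖η.2‖ ^ 2 + 3 * inner ℝ η.2 η.1 + 3 * ‖η.1‖ ^ 2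

/-- The fundamental solution of the Kolmogorov equation at time one, normalised to have
integral one. -/
def kolKernel (η : E d × E d) : ℝ := (∫ η : E d × E d, exp (-kolForm η))⁻¹ * exp (-kolForm η)

@[fun_prop]
lemma continuous_kolForm : Continuous (kolForm (d := d)) := by
  unfold kolForm
  fun_prop

@[fun_prop]
lemma continuous_kolKernel : Continuous (kolKernel (d := d)) := by
  unfold kolKernel
  fun_prop

lemma weight_le_kolForm (η : E d × E d) : (weight η - 1) / 8 ≤ kolForm η := by
  have h := neg_le_of_abs_le (abs_real_inner_le_norm η.2 η.1)
  unfold weight kolForm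
  nlinarith [sq_nonneg (3 / 2 * ‖η.1‖ - ‖η.2‖), sq_nonneg ‖η.1‖, sq_nonneg ‖η.2‖]

lemma exp_neg_kolForm_le (η : E d × E d) :
    exp (-kolForm η) ≤ exp (1 / 8) * exp (-(1 / 8) * weight η) := by
  rw [← exp_add]
  gcongr
  linarith [weight_le_kolForm η]

lemma integrable_exp_neg_kolForm : Integrable fun η : E d × E d => exp (-kolForm η) :=
  ((integrable_exp_neg_mul_weight (c := 1 / 8) (by norm_num)).const_mul (exp (1 / 8))).mono'
    (by fun_prop) (ae_of_all _ fun η => by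
      rw [Real.norm_of_nonneg (exp_pos _).le]
      exact exp_neg_kolForm_le η)

lemma integral_exp_neg_kolForm_pos : 0 < ∫ η : E d × E d, exp (-kolForm η) :=
  integral_exp_pos integrable_exp_neg_kolForm

lemma kolKernel_pos (η : E d × E d) : 0 < kolKernel η :=
  mul_pos (inv_pos.2 integral_exp_neg_kolForm_pos) (exp_pos _)

lemma integral_kolKernel : ∫ η : E d × E d, kolKernel η = 1 := by
  unfold kolKernel
  rw [integral_const_mul, inv_mul_cancel₀ integral_exp_neg_kolForm_pos.ne']

lemma exists_kolKernel_le (d : ℕ) :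
    ∃ C, 0 ≤ C ∧ ∀ η : E d × E d, kolKernel η ≤ C * exp (-(1 / 8) * weight η) := by
  have hpos := (inv_pos.2 (integral_exp_neg_kolForm_pos (d := d))).le
  refine ⟨_, mul_nonneg hpos (exp_pos (1 / 8)).le, fun η => ?_⟩
  rw [mul_assoc]
  exact mul_le_mul_of_nonneg_left (exp_neg_kolForm_le η) hpos

lemma integrable_mul_kolKernel {h : E d × E d → ℝ} {C : ℝ} {k : ℕ} (hc : Continuous h)
    (hb : ∀ η, |h η| ≤ C * weight η ^ k) : Integrable fun η => h η * kolKernel η := by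
  obtain ⟨C', _, hK⟩ := exists_kolKernel_le d
  refine ((integrable_weight_pow_mul_exp (c := 1 / 8) (by norm_num) k).const_mul (C * C')).mono'
    (by fun_prop) (ae_of_all _ fun η => ?_)
  rw [norm_mul, Real.norm_eq_abs, Real.norm_of_nonneg (kolKernel_pos η).le]
  calc |h η| * kolKernel η ≤ C * weight η ^ k * (C' * exp (-(1 / 8) * weight η)) :=
        mul_le_mul (hb η) (hK η) (kolKernel_pos η).le ((abs_nonneg _).trans (hb η))
    _ = C * C' * (weight η ^ k * exp (-(1 / 8) * weight η)) := by ring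

lemma kinMap_kinMap (z ζ ξ : Z d) (ρ σ : ℝ) :
    kinMap (kinMap z σ ζ) (σ * ρ) ξ = kinMap z σ (kinMap ζ ρ ξ) := by
  refine Prod.ext ?_ (Prod.ext ?_ ?_) <;> simp only [kinMap]
  · ring
  · module
  · module

lemma weight_kinMap_le (z : Z d) (ρ : ℝ) (η : E d × E d) :
    weight (kinMap z ρ (-1, η)).2 ≤ 8 * (1 + ρ ^ 2) ^ 3 * weight z.2 * weight η := by
  have hsq (a b : E d) (c : ℝ) : ‖a + c • b‖ ^ 2 ≤ 2 * (‖a‖ ^ 2 + c ^ 2 * ‖b‖ ^ 2) := by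
    have h := parallelogram_law_with_norm ℝ a (c • b)
    rw [← sq_abs c, ← Real.norm_eq_abs, ← mul_pow, ← norm_smul]
    linarith [mul_self_nonneg ‖a - c • b‖]
  have hx := hsq (z.2.1 + ρ ^ 3 • η.1) z.2.2 (ρ ^ 2 * -1)
  have hx' := hsq z.2.1 η.1 (ρ ^ 3)
  have hv := hsq z.2.2 η.2 ρ
  have hρ := sq_nonneg ρ
  have h₀ : 1 ≤ (1 + ρ ^ 2) ^ 3 := one_le_pow₀ (by linarith)
  have h₁ : ρ ^ 2 ≤ (1 + ρ ^ 2) ^ 3 := by linarith [pow_nonneg hρ 2, pow_nonneg hρ 3]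
  have h₂ : (ρ ^ 2 * -1) ^ 2 ≤ (1 + ρ ^ 2) ^ 3 := by linarith [pow_nonneg hρ 2, pow_nonneg hρ 3]
  have h₃ : (ρ ^ 3) ^ 2 ≤ (1 + ρ ^ 2) ^ 3 := by linarith [pow_nonneg hρ 2, pow_nonneg hρ 3]
  have hsum : weight (kinMap z ρ (-1, η)).2 ≤ 4 * (1 + ρ ^ 2) ^ 3 * (weight z.2 + weight η) := by
    simp only [weight, kinMap]
    linarith [mul_le_mul_of_nonneg_right h₀ (sq_nonneg ‖z.2.1‖),
      mul_le_mul_of_nonneg_right h₀ (sq_nonneg ‖z.2.2‖),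
      mul_le_mul_of_nonneg_right h₂ (sq_nonneg ‖z.2.2‖),
      mul_le_mul_of_nonneg_right h₁ (sq_nonneg ‖η.2‖),
      mul_le_mul_of_nonneg_right h₃ (sq_nonneg ‖η.1‖),
      mul_nonneg (zero_le_one.trans h₀) (sq_nonneg ‖η.2‖)]
  refine hsum.trans ?_
  have := mul_le_mul_of_nonneg_left (by nlinarith [one_le_weight z.2, one_le_weight η] :
    weight z.2 + weight η ≤ 2 * (weight z.2 * weight η)) (by positivity : 0 ≤ 4 * (1 + ρ ^ 2) ^ 3)
  linarith

/-- The solution of the homogeneous Kolmogorov equation with data `f` at time `-1`. The change of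
variables `kinMap z √(z.1 + 1)` carries the fundamental solution at time one to the one with pole
`z`, and takes the time `-1` to itself. -/
def kolSol (f : E d × E d → ℝ) (z : Z d) : ℝ :=
  ∫ η, f (kinMap z √(z.1 + 1) (-1, η)).2 * kolKernel η

section kolSol

lemma kolSol_initial (f : E d × E d → ℝ) (η : E d × E d) : kolSol f (-1, η) = f η := by
  simp [kolSol, kinMap, integral_const_mul, integral_kolKernel]

lemma kolSol_kinMap (f : E d × E d → ℝ) (z : Z d) {ρ : ℝ} (hρ : 0 ≤ ρ) (hz : ρ ^ 2 = z.1 + 1)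
    {ζ : Z d} (hζ : -1 ≤ ζ.1) :
    kolSol f (kinMap z ρ ζ) = kolSol (fun η => f (kinMap z ρ (-1, η)).2) ζ := by
  have htime : √((kinMap z ρ ζ).1 + 1) = ρ * √(ζ.1 + 1) := by
    have : (kinMap z ρ ζ).1 + 1 = ρ ^ 2 * (ζ.1 + 1) := by
      simp only [kinMap]
      linarith
    rw [this, Real.sqrt_mul (sq_nonneg ρ), Real.sqrt_sq hρ]
  have hslice (η : E d × E d) :
      (-1, (kinMap ζ √(ζ.1 + 1) (-1, η)).2) = kinMap ζ √(ζ.1 + 1) (-1, η) := by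
    refine Prod.ext ?_ rfl
    simp only [kinMap, Real.sq_sqrt (by linarith : 0 ≤ ζ.1 + 1)]
    ring
  simp only [kolSol, htime, kinMap_kinMap, hslice]

variable {f : E d × E d → ℝ} {M : ℝ}

lemma nonneg_of_abs_le_mul_weight_sq (hM : ∀ η, |f η| ≤ M * weight η ^ 2) : 0 ≤ M :=
  nonneg_of_mul_nonneg_left ((abs_nonneg _).trans (hM 0)) (pow_pos (weight_pos 0) 2)

lemma abs_comp_kinMap_le (hM : ∀ η, |f η| ≤ M * weight η ^ 2) (z : Z d) (ρ : ℝ) (η : E d × E d) :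
    |f (kinMap z ρ (-1, η)).2| ≤ M * (8 * (1 + ρ ^ 2) ^ 3 * weight z.2) ^ 2 * weight η ^ 2 := by
  have := (weight_pos (kinMap z ρ (-1, η)).2).le
  have := nonneg_of_abs_le_mul_weight_sq hM
  calc |f (kinMap z ρ (-1, η)).2| ≤ M * weight (kinMap z ρ (-1, η)).2 ^ 2 := hM _
    _ ≤ M * (8 * (1 + ρ ^ 2) ^ 3 * weight z.2 * weight η) ^ 2 := by
      gcongr
      exact weight_kinMap_le z ρ η
    _ = M * (8 * (1 + ρ ^ 2) ^ 3 * weight z.2) ^ 2 * weight η ^ 2 := by ring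

lemma norm_comp_kinMap_mul_kolKernel_le (hM : ∀ η, |f η| ≤ M * weight η ^ 2) (z : Z d) (ρ : ℝ)
    (η : E d × E d) : ‖f (kinMap z ρ (-1, η)).2 * kolKernel η‖ ≤
      M * (8 * (1 + ρ ^ 2) ^ 3 * weight z.2) ^ 2 * (weight η ^ 2 * kolKernel η) := by
  rw [norm_mul, Real.norm_of_nonneg (kolKernel_pos η).le, ← mul_assoc]
  exact mul_le_mul_of_nonneg_right (abs_comp_kinMap_le hM z ρ η) (kolKernel_pos η).le

lemma integrable_weight_pow_mul_kolKernel (k : ℕ) :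
    Integrable fun η : E d × E d => weight η ^ k * kolKernel η :=
  integrable_mul_kolKernel (C := 1) (k := k) (by fun_prop) fun η => by
    rw [abs_of_pos (pow_pos (weight_pos η) k), one_mul]

lemma exists_abs_kolSol_le (d : ℕ) :
    ∃ C, 0 ≤ C ∧ ∀ (f : E d × E d → ℝ) (M : ℝ), (∀ η, |f η| ≤ M * weight η ^ 2) →
      ∀ z : Z d, z.1 ≤ 0 → |kolSol f z| ≤ C * M * weight z.2 ^ 2 := by
  have hK : 0 ≤ ∫ η : E d × E d, weight η ^ 2 * kolKernel η :=
    integral_nonneg fun η => mul_nonneg (sq_nonneg _) (kolKernel_pos η).le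
  refine ⟨64 ^ 2 * ∫ η : E d × E d, weight η ^ 2 * kolKernel η, by positivity,
    fun f M hM z hz => ?_⟩
  have := nonneg_of_abs_le_mul_weight_sq hM
  have := (weight_pos z.2).le
  have hρ : √(z.1 + 1) ^ 2 ≤ 1 := pow_le_one₀ (sqrt_nonneg _) (sqrt_le_one.2 (by linarith))
  have hbound := norm_integral_le_of_norm_le
    ((integrable_weight_pow_mul_kolKernel 2).const_mul _)
    (ae_of_all _ (norm_comp_kinMap_mul_kolKernel_le hM z √(z.1 + 1)))
  rw [integral_const_mul, Real.norm_eq_abs] at hbound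
  calc |kolSol f z| ≤ M * (8 * (1 + √(z.1 + 1) ^ 2) ^ 3 * weight z.2) ^ 2 *
        ∫ η : E d × E d, weight η ^ 2 * kolKernel η := hbound
    _ ≤ M * (8 * (1 + 1) ^ 3 * weight z.2) ^ 2 * ∫ η : E d × E d, weight η ^ 2 * kolKernel η := by
      refine mul_le_mul_of_nonneg_right ?_ hK
      gcongr
    _ = 64 ^ 2 * (∫ η : E d × E d, weight η ^ 2 * kolKernel η) * M * weight z.2 ^ 2 := by ring

lemma continuous_kolSol (hf : Continuous f) (hM : ∀ η, |f η| ≤ M * weight η ^ 2) :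
    Continuous (kolSol f) := by
  have := nonneg_of_abs_le_mul_weight_sq hM
  have hkin (η : E d × E d) : Continuous fun z : Z d => kinMap z √(z.1 + 1) (-1, η) := by
    unfold kinMap
    fun_prop
  let G (z : Z d) : ℝ := M * (8 * (1 + √(z.1 + 1) ^ 2) ^ 3 * weight z.2) ^ 2
  have hG : Continuous G := by fun_prop
  refine continuous_iff_continuousAt.2 fun z₀ => ?_
  refine continuousAt_of_dominated (bound := fun η => (G z₀ + 1) * (weight η ^ 2 * kolKernel η))
    (Eventually.of_forall fun z => ?_) ?_ ((integrable_weight_pow_mul_kolKernel 2).const_mul _)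
    (ae_of_all _ fun η => ?_)
  · exact Continuous.aestronglyMeasurable (by fun_prop)
  · filter_upwards [hG.continuousAt.eventually_lt continuousAt_const (lt_add_one (G z₀))] with z hz
    refine ae_of_all _ fun η => (norm_comp_kinMap_mul_kolKernel_le hM z _ η).trans ?_
    exact mul_le_mul_of_nonneg_right hz.le (mul_nonneg (sq_nonneg _) (kolKernel_pos η).le)
  · exact ((hf.comp (hkin η).snd).mul_const _).continuousAt

end kolSol

open Measure in
lemma integral_comp_add_smul_prod {V W F : Type*} [NormedAddCommGroup V] [NormedSpace ℝ V]
    [FiniteDimensional ℝ V] [MeasurableSpace V] [BorelSpace V] [NormedAddCommGroup W]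
    [NormedSpace ℝ W] [FiniteDimensional ℝ W] [MeasurableSpace W] [BorelSpace W]
    [NormedAddCommGroup F] [NormedSpace ℝ F] (μ : Measure V) [μ.IsAddHaarMeasure] (ν : Measure W)
    [ν.IsAddHaarMeasure] (h : V × W → F) {a b : ℝ} (ha : a ≠ 0) (hb : b ≠ 0) (x : V) (v : W) :
    ∫ η, h (x + a • η.1, v + b • η.2) ∂μ.prod ν =
      |(a ^ Module.finrank ℝ V * b ^ Module.finrank ℝ W)⁻¹| • ∫ η, h η ∂μ.prod ν := by
  let T : (V × W) ≃ₗ[ℝ] V × W :=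
    (LinearEquiv.smulOfNeZero ℝ V a ha).prodCongr (LinearEquiv.smulOfNeZero ℝ W b hb)
  have hdet : LinearMap.det (T : V × W →ₗ[ℝ] V × W) =
      a ^ Module.finrank ℝ V * b ^ Module.finrank ℝ W := by
    have : (T : V × W →ₗ[ℝ] V × W) =
        (a • LinearMap.id : V →ₗ[ℝ] V).prodMap (b • LinearMap.id : W →ₗ[ℝ] W) := rfl
    simp [this, LinearMap.det_prodMap]
  have hmap := map_linearMap_addHaar_eq_smul_addHaar (μ.prod ν)
    (f := (T : V × W →ₗ[ℝ] V × W)) (by rw [hdet]; positivity)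
  have hemb : MeasurableEmbedding T := T.toContinuousLinearEquiv.toHomeomorph.measurableEmbedding
  calc ∫ η, h (x + a • η.1, v + b • η.2) ∂μ.prod ν
      = ∫ η, (fun p => h ((x, v) + p)) (T η) ∂μ.prod ν := rfl
    _ = ∫ p, h ((x, v) + p) ∂(μ.prod ν).map T := (hemb.integral_map fun p => h ((x, v) + p)).symm
    _ = _ := by
      rw [show (μ.prod ν).map T = _ from hmap, integral_smul_measure,
        integral_add_left_eq_self (fun p => h p), hdet, ENNReal.toReal_ofReal (abs_nonneg _)]

/-- The logarithm of the ratio of the fundamental solutions with poles `ζ` and `0`, both evaluated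
at the point of the time slice `-1` with coordinates `η`. -/
def logRatio (ζ : Z d) (η : E d × E d) : ℝ :=
  kolForm η - 2 * d * log (1 + ζ.1) -
    ((1 + ζ.1)⁻¹ * (‖η.2‖ ^ 2 + inner ℝ η.2 ζ.2.2 + ‖ζ.2.2‖ ^ 2) +
      3 * ((1 + ζ.1)⁻¹ ^ 2 * inner ℝ (η.2 + ζ.2.2) (η.1 - ζ.2.1)) +
      3 * ((1 + ζ.1)⁻¹ ^ 3 * ‖η.1 - ζ.2.1‖ ^ 2))

@[fun_prop]
lemma continuous_logRatio (ζ : Z d) : Continuous (logRatio ζ) := by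
  unfold logRatio
  fun_prop

lemma logRatio_kinMap (ζ : Z d) {ρ : ℝ} (hρ : 0 < ρ) (hζ : ρ ^ 2 = 1 + ζ.1) (η : E d × E d) :
    logRatio ζ (kinMap ζ ρ (-1, η)).2 =
      kolForm (kinMap ζ ρ (-1, η)).2 - kolForm η - 4 * d * log ρ := by
  obtain ⟨Y, W⟩ := η
  have hlog : 2 * d * log (ρ ^ 2) = 4 * d * log ρ := by
    rw [Real.log_pow]
    push_cast
    ring
  have hdisp : (kinMap ζ ρ (-1, (Y, W))).2.1 - ζ.2.1 = ρ ^ 3 • Y - ρ ^ 2 • ζ.2.2 := by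
    simp only [kinMap]
    module
  have hvel : (kinMap ζ ρ (-1, (Y, W))).2.2 = ζ.2.2 + ρ • W := rfl
  simp only [logRatio, ← hζ, hlog, hdisp, hvel]
  simp only [kolForm, norm_add_sq_real, norm_sub_sq_real, norm_smul, mul_pow, norm_eq_abs, sq_abs,
    inner_add_left, inner_sub_right, real_inner_smul_left, real_inner_smul_right,
    real_inner_self_eq_norm_sq, real_inner_comm ζ.2.2 W,
    real_inner_comm ζ.2.2 Y]
  field_simp
  ring

lemma kolSol_eq_integral_exp_logRatio (f : E d × E d → ℝ) {ζ : Z d} (hζ : -1 < ζ.1) :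
    kolSol f ζ = ∫ η, f η * (exp (logRatio ζ η) * kolKernel η) := by
  have hρ : 0 < √(ζ.1 + 1) := sqrt_pos.2 (by linarith)
  set ρ := √(ζ.1 + 1) with hρdef
  have hρsq : ρ ^ 2 = 1 + ζ.1 := by rw [hρdef, Real.sq_sqrt (by linarith), add_comm]
  have hkernel (η : E d × E d) : exp (logRatio ζ (kinMap ζ ρ (-1, η)).2) *
      kolKernel (kinMap ζ ρ (-1, η)).2 = (ρ ^ (4 * d))⁻¹ * kolKernel η := by
    have hpow : (ρ ^ (4 * d))⁻¹ = exp (-(4 * d * log ρ)) := by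
      rw [exp_neg, ← exp_log (pow_pos hρ (4 * d)), log_pow]
      push_cast
      rfl
    rw [logRatio_kinMap ζ hρ hρsq, hpow]
    simp only [kolKernel]
    rw [mul_left_comm, ← exp_add, mul_left_comm, ← exp_add]
    ring_nf
  have hcov := integral_comp_add_smul_prod volume volume
    (fun η => f η * (exp (logRatio ζ η) * kolKernel η)) (pow_pos hρ 3).ne' hρ.ne'
    (ζ.2.1 - ρ ^ 2 • ζ.2.2) ζ.2.2
  have hmap (η : E d × E d) : (ζ.2.1 - ρ ^ 2 • ζ.2.2 + ρ ^ 3 • η.1, ζ.2.2 + ρ • η.2) =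
      (kinMap ζ ρ (-1, η)).2 := by
    refine Prod.ext ?_ rfl
    simp only [kinMap]
    module
  simp only [hmap, hkernel] at hcov
  have hdet : |((ρ ^ 3) ^ d * ρ ^ d)⁻¹| = (ρ ^ (4 * d))⁻¹ := by
    rw [abs_of_pos (by positivity)]
    ring_nf
  rw [finrank_euclideanSpace_fin, hdet, smul_eq_mul] at hcov
  refine mul_left_cancel₀ (inv_ne_zero (pow_pos hρ (4 * d)).ne') (Eq.trans ?_ hcov)
  simp only [kolSol, ← hρdef, ← integral_const_mul]
  exact integral_congr_ae (ae_of_all _ fun η => by ring)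

section expansion

variable {s l : ℝ}

lemma abs_inv_one_add_pow_sub_le (hs : -(1 / 2) ≤ s) (k : ℕ) :
    |(1 + s)⁻¹ ^ k - 1| ≤ 4 ^ k * |s| ∧ |(1 + s)⁻¹ ^ k - 1 + k * s| ≤ 4 ^ k * s ^ 2 := by
  have hσs : (1 + s)⁻¹ * (1 + s) = 1 := inv_mul_cancel₀ (by linarith)
  have hσ : |(1 + s)⁻¹| ≤ 2 := by
    rw [abs_of_nonneg (inv_nonneg.2 (by linarith))]
    exact inv_le_of_inv_le₀ two_pos (by linarith)
  generalize (1 + s)⁻¹ = σ at hσs hσ ⊢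
  induction k with
  | zero => simp [sq_nonneg]
  | succ k ih =>
    have hk : (k : ℝ) + 1 ≤ 4 ^ k := by exact_mod_cast Nat.lt_pow_self (by norm_num : 1 < 4)
    constructor
    · calc |σ ^ (k + 1) - 1| = |σ * ((σ ^ k - 1) - s)| := by
            congr 1
            linear_combination hσs
        _ ≤ 2 * (4 ^ k * |s| + |s|) := by
          rw [abs_mul]
          gcongr
          exact (abs_sub _ _).trans (by linarith [ih.1])
        _ ≤ 4 ^ (k + 1) * |s| := by
          nlinarith [abs_nonneg s, one_le_pow₀ (by norm_num : (1 : ℝ) ≤ 4) (n := k),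
            pow_succ (4 : ℝ) k]
    · calc |σ ^ (k + 1) - 1 + (k + 1 : ℕ) * s|
          = |σ * ((σ ^ k - 1 + k * s) + (k + 1) * s ^ 2)| := by
            push_cast
            congr 1
            linear_combination (1 - (k + 1) * s) * hσs
        _ ≤ 2 * (4 ^ k * s ^ 2 + 4 ^ k * s ^ 2) := by
          rw [abs_mul]
          gcongr
          refine (abs_add_le _ _).trans (add_le_add ih.2 ?_)
          rw [abs_of_nonneg (by positivity)]
          gcongr
        _ = 4 ^ (k + 1) * s ^ 2 := by ring

lemma abs_log_one_add_sub_le (hs : -(1 / 2) ≤ s) : |log (1 + s) - s| ≤ 2 * s ^ 2 := by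
  have hpos : 0 < 1 + s := by linarith
  have hinv : s - 2 * s ^ 2 ≤ 1 - (1 + s)⁻¹ := by
    have : (1 + s)⁻¹ * (1 + s) = 1 := inv_mul_cancel₀ hpos.ne'
    nlinarith [mul_nonneg (sq_nonneg s) (by linarith : 0 ≤ 1 + 2 * s)]
  rw [abs_le]
  constructor
  · linarith [one_sub_inv_le_log_of_pos hpos]
  · linarith [log_le_sub_one_of_pos hpos, sq_nonneg s]

lemma abs_inv_one_add_pow_mul_sub_le (hs : -l ^ 2 < s) (hs₀ : s ≤ 0) (hl₀ : 0 ≤ l)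
    (hl : l ≤ 1 / 2) (k : ℕ) {a x₀ x₁ x₂ x₃ : ℝ} (h₀ : |x₀| ≤ a) (h₁ : |x₁| ≤ a * l)
    (h₂ : |x₂| ≤ a * l ^ 2) (h₃ : |x₃| ≤ a * l ^ 3) :
    |(1 + s)⁻¹ ^ k * (x₀ + x₁ + x₂ + x₃) - (x₀ + x₁ + x₂ - k * s * x₀)| ≤
      4 * 4 ^ k * a * l ^ 3 := by
  have ha : 0 ≤ a := (abs_nonneg _).trans h₀
  have hsl : |s| ≤ l ^ 2 := abs_le.2 ⟨hs.le, hs₀.trans (sq_nonneg l)⟩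
  have hs₂ : s ^ 2 ≤ l ^ 3 := by
    calc s ^ 2 = |s| ^ 2 := (sq_abs s).symm
      _ ≤ (l ^ 2) ^ 2 := by gcongr
      _ = l ^ 3 * l := by ring
      _ ≤ l ^ 3 := mul_le_of_le_one_right (by positivity) (by linarith)
  have hlsq : l ^ 2 ≤ 1 / 4 := by nlinarith
  obtain ⟨hfst, hsnd⟩ := abs_inv_one_add_pow_sub_le (s := s) (by linarith) k
  generalize (1 + s)⁻¹ ^ k = τ at hfst hsnd ⊢
  have hk : (1 : ℝ) ≤ 4 ^ k := one_le_pow₀ (by norm_num)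
  have hfst' : |τ - 1| ≤ 4 ^ k * l ^ 2 := hfst.trans (by gcongr)
  have hτ : |τ| ≤ 5 / 4 * 4 ^ k := by
    have := (abs_add_le (τ - 1) 1).trans_eq (by rw [abs_one])
    rw [sub_add_cancel] at this
    nlinarith [mul_le_mul_of_nonneg_left hlsq (zero_le_one.trans hk)]
  have hx₁₂ : |x₁ + x₂| ≤ 3 / 2 * (a * l) := by
    have := (abs_add_le x₁ x₂).trans (add_le_add h₁ h₂)
    nlinarith [mul_nonneg ha hl₀]
  calc |τ * (x₀ + x₁ + x₂ + x₃) - (x₀ + x₁ + x₂ - k * s * x₀)|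
      = |(τ - 1 + k * s) * x₀ + (τ - 1) * (x₁ + x₂) + τ * x₃| := by ring_nf
    _ ≤ |τ - 1 + k * s| * |x₀| + |τ - 1| * |x₁ + x₂| + |τ| * |x₃| := by
      simp only [← abs_mul]
      exact abs_add_three _ _ _
    _ ≤ 4 ^ k * l ^ 3 * a + 4 ^ k * l ^ 2 * (3 / 2 * (a * l)) + 5 / 4 * 4 ^ k * (a * l ^ 3) := by
      gcongr
      exact hsnd.trans (by gcongr)
    _ ≤ 4 * 4 ^ k * a * l ^ 3 := by
      linarith [mul_nonneg (mul_nonneg (zero_le_one.trans hk) ha) (pow_nonneg hl₀ 3)]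

end expansion

/-- Minus the velocity gradient at the pole of the logarithm of the fundamental solution of the
Kolmogorov equation, see `logRatio`. -/
def kolScore (η : E d × E d) : E d := η.2 + (3 : ℝ) • η.1

@[fun_prop]
lemma continuous_kolScore : Continuous (kolScore (d := d)) := by
  unfold kolScore
  fun_prop

lemma sq_norm_kolScore (η : E d × E d) :
    ‖kolScore η‖ ^ 2 = ‖η.2‖ ^ 2 + 6 * inner ℝ η.2 η.1 + 9 * ‖η.1‖ ^ 2 := by
  rw [kolScore, norm_add_sq_real, real_inner_smul_right, norm_smul, mul_pow]
  norm_num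
  ring

lemma sq_norm_kolScore_le (η : E d × E d) : ‖kolScore η‖ ^ 2 ≤ 16 * weight η := by
  rw [sq_norm_kolScore]
  linarith [sq_norm_fst_le_weight η, sq_norm_snd_le_weight η, le_of_abs_le (abs_inner_le_weight η)]

lemma norm_kolScore_le (η : E d × E d) : ‖kolScore η‖ ≤ 4 * weight η := by
  refine le_of_sq_le_sq ?_ (by linarith [weight_pos η])
  nlinarith [sq_norm_kolScore_le η, one_le_weight η]

lemma abs_real_inner_le_of_norm_le {V : Type*} [NormedAddCommGroup V] [InnerProductSpace ℝ V]
    {x y : V} {a b : ℝ} (hx : ‖x‖ ≤ a) (hy : ‖y‖ ≤ b) : |inner ℝ x y| ≤ a * b :=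
  (abs_real_inner_le_norm x y).trans
    (mul_le_mul hx hy (norm_nonneg y) ((norm_nonneg x).trans hx))

section logRatio

variable {l : ℝ} {ζ : Z d}

lemma abs_inv_one_add_mul_sq_norm_sub_le (hl₀ : 0 ≤ l) (hl : l ≤ 1 / 2) (hζ : ζ ∈ kCyl l 0)
    (η : E d × E d) :
    |(1 + ζ.1)⁻¹ * (‖η.2‖ ^ 2 + inner ℝ η.2 ζ.2.2 + ‖ζ.2.2‖ ^ 2) -
        (‖η.2‖ ^ 2 + inner ℝ η.2 ζ.2.2 + ‖ζ.2.2‖ ^ 2 - ζ.1 * ‖η.2‖ ^ 2)| ≤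
      16 * weight η * l ^ 3 := by
  obtain ⟨hs, hs₀, -, hu⟩ := mem_kCyl_zero.1 hζ
  have hw := one_le_weight η
  have h₂ : |‖ζ.2.2‖ ^ 2| ≤ weight η * l ^ 2 := by
    rw [abs_of_nonneg (sq_nonneg _)]
    exact (by gcongr : ‖ζ.2.2‖ ^ 2 ≤ l ^ 2).trans (le_mul_of_one_le_left (sq_nonneg l) hw)
  have := abs_inv_one_add_pow_mul_sub_le hs hs₀ hl₀ hl 1 (a := weight η)
    ((abs_of_nonneg (sq_nonneg _)).trans_le (sq_norm_snd_le_weight η))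
    (abs_real_inner_le_of_norm_le (norm_snd_le_weight η) hu.le) h₂
    (x₃ := 0) (by simpa using by positivity)
  convert this using 2
  · push_cast
    ring
  · ring

lemma abs_inv_one_add_sq_mul_inner_sub_le (hl₀ : 0 ≤ l) (hl : l ≤ 1 / 2) (hζ : ζ ∈ kCyl l 0)
    (η : E d × E d) :
    |(1 + ζ.1)⁻¹ ^ 2 * inner ℝ (η.2 + ζ.2.2) (η.1 - ζ.2.1) -
        (inner ℝ η.2 η.1 + inner ℝ ζ.2.2 η.1 - 2 * ζ.1 * inner ℝ η.2 η.1)| ≤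
      128 * weight η * l ^ 3 := by
  obtain ⟨hs, hs₀, hy, hu⟩ := mem_kCyl_zero.1 hζ
  have hw := one_le_weight η
  have h₁ : |inner ℝ ζ.2.2 η.1| ≤ 2 * weight η * l := by
    have := abs_real_inner_le_of_norm_le hu.le (norm_fst_le_weight η)
    linarith [mul_nonneg hl₀ (zero_le_one.trans hw)]
  have h₃ : |-inner ℝ (η.2 + ζ.2.2) ζ.2.1| ≤ 2 * weight η * l ^ 3 := by
    rw [abs_neg]
    refine abs_real_inner_le_of_norm_le ((norm_add_le _ _).trans ?_) hy.le
    linarith [norm_snd_le_weight η]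
  have := abs_inv_one_add_pow_mul_sub_le hs hs₀ hl₀ hl 2 (a := 2 * weight η)
    ((abs_inner_le_weight η).trans (by linarith)) h₁ (x₂ := 0) (by simpa using by positivity) h₃
  convert this using 2
  · simp only [inner_sub_right, inner_add_left]
    push_cast
    ring
  · ring

lemma abs_inv_one_add_cube_mul_sq_norm_sub_le (hl₀ : 0 ≤ l) (hl : l ≤ 1 / 2) (hζ : ζ ∈ kCyl l 0)
    (η : E d × E d) :
    |(1 + ζ.1)⁻¹ ^ 3 * ‖η.1 - ζ.2.1‖ ^ 2 - (‖η.1‖ ^ 2 - 3 * ζ.1 * ‖η.1‖ ^ 2)| ≤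
      768 * weight η * l ^ 3 := by
  obtain ⟨hs, hs₀, hy, -⟩ := mem_kCyl_zero.1 hζ
  have hw := one_le_weight η
  have hl3 : l ^ 3 ≤ 1 := pow_le_one₀ hl₀ (by linarith)
  have h₃ : |inner ℝ (ζ.2.1 - (2 : ℝ) • η.1) ζ.2.1| ≤ 3 * weight η * l ^ 3 := by
    refine abs_real_inner_le_of_norm_le ((norm_sub_le _ _).trans ?_) hy.le
    rw [norm_smul, Real.norm_ofNat]
    linarith [norm_fst_le_weight η]
  have := abs_inv_one_add_pow_mul_sub_le hs hs₀ hl₀ hl 3 (a := 3 * weight η)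
    ((abs_of_nonneg (sq_nonneg _)).trans_le ((sq_norm_fst_le_weight η).trans (by linarith)))
    (x₁ := 0) (by simpa using by positivity) (x₂ := 0) (by simpa using by positivity) h₃
  convert this using 2
  · simp only [inner_sub_left, norm_sub_sq_real, real_inner_smul_left, real_inner_self_eq_norm_sq]
    push_cast
    ring
  · ring

lemma abs_logRatio_sub_le (hl₀ : 0 ≤ l) (hl : l ≤ 1 / 2) (hζ : ζ ∈ kCyl l 0) (η : E d × E d) :
    |logRatio ζ η - (-inner ℝ (kolScore η) ζ.2.2 +
        (‖kolScore η‖ ^ 2 * ζ.1 - 2 * d * ζ.1 - ‖ζ.2.2‖ ^ 2))| ≤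
      (4 * d + 2704) * l ^ 3 * weight η := by
  obtain ⟨hs, hs₀, -, -⟩ := mem_kCyl_zero.1 hζ
  have hsl : |ζ.1| ≤ l ^ 2 := abs_le.2 ⟨hs.le, hs₀.trans (sq_nonneg l)⟩
  have hw := one_le_weight η
  have hlog : 2 * d * |log (1 + ζ.1) - ζ.1| ≤ 4 * d * l ^ 3 * weight η := by
    have hlsq : l ^ 2 ≤ 1 / 4 := by nlinarith
    calc 2 * d * |log (1 + ζ.1) - ζ.1| ≤ 2 * d * (2 * (l ^ 2) ^ 2) := by
          gcongr
          exact (abs_log_one_add_sub_le (by linarith)).trans (by rw [← sq_abs]; gcongr)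
      _ = 4 * d * l ^ 3 * l := by ring
      _ ≤ 4 * d * l ^ 3 * weight η := by
        gcongr
        linarith
  have h₁ := abs_inv_one_add_mul_sq_norm_sub_le hl₀ hl hζ η
  have h₂ := abs_inv_one_add_sq_mul_inner_sub_le hl₀ hl hζ η
  have h₃ := abs_inv_one_add_cube_mul_sq_norm_sub_le hl₀ hl hζ η
  have hinner : inner ℝ (kolScore η) ζ.2.2 = inner ℝ η.2 ζ.2.2 + 3 * inner ℝ ζ.2.2 η.1 := by
    rw [kolScore, inner_add_left, real_inner_smul_left, real_inner_comm ζ.2.2 η.1]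
  simp only [logRatio, kolForm, sq_norm_kolScore, hinner]
  have h2d : (0 : ℝ) ≤ 2 * d := by positivity
  rw [← abs_of_nonneg h2d, ← abs_mul] at hlog
  simp only [abs_le] at *
  constructor <;> linarith

end logRatio

lemma abs_exp_sub_taylor_two_le (x : ℝ) :
    |exp x - (1 + x + x ^ 2 / 2)| ≤ |x| ^ 3 * exp |x| := by
  have h := Complex.norm_exp_sub_sum_le_norm_mul_exp (x : ℂ) 3
  have hcast : Complex.exp x - ∑ m ∈ Finset.range 3, (x : ℂ) ^ m / m.factorial =
      ((exp x - (1 + x + x ^ 2 / 2) : ℝ) : ℂ) := by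
    simp [Finset.sum_range_succ]
  rwa [hcast, Complex.norm_real, Complex.norm_real] at h

lemma abs_exp_sub_graded_taylor_two_le {X l p₁ p₂ θ : ℝ} (hX : 1 ≤ X) (hl₀ : 0 ≤ l) (hl : l ≤ 1)
    (h₁ : |p₁| ≤ X * l) (h₂ : |p₂| ≤ X * l ^ 2) (hθ : |θ - (p₁ + p₂)| ≤ X * l ^ 3) :
    |exp θ - (1 + p₁ + p₂ + p₁ ^ 2 / 2)| ≤ 32 * (X * l) ^ 3 * exp (3 * (X * l)) := by
  have hX₂ : X * l ^ 2 ≤ X * l := by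
    gcongr
    exact pow_le_of_le_one hl₀ hl two_ne_zero
  have hX₃ : X * l ^ 3 ≤ X * l ^ 2 := by
    gcongr ?_ * ?_
    exact pow_le_pow_of_le_one hl₀ hl (by norm_num)
  have hθabs : |θ| ≤ 3 * (X * l) := by
    rw [abs_le] at *
    constructor <;> linarith
  have htaylor : |exp θ - (1 + θ + θ ^ 2 / 2)| ≤ 27 * (X * l) ^ 3 * exp (3 * (X * l)) :=
    calc _ ≤ |θ| ^ 3 * exp |θ| := abs_exp_sub_taylor_two_le θ
      _ ≤ (3 * (X * l)) ^ 3 * exp (3 * (X * l)) := by gcongr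
      _ = _ := by ring
  have hcross : |(θ - p₁) * (θ + p₁)| ≤ 8 * (X * l) ^ 3 :=
    calc _ ≤ (2 * (X * l ^ 2)) * (4 * (X * l)) := by
          rw [abs_mul]
          gcongr <;> (rw [abs_le] at *; constructor <;> linarith)
      _ = 8 * X ^ 2 * l ^ 3 := by ring
      _ ≤ 8 * X ^ 3 * l ^ 3 := by gcongr; norm_num
      _ = 8 * (X * l) ^ 3 := by ring
  have hrem : |θ - (p₁ + p₂)| ≤ (X * l) ^ 3 := by
    rw [mul_pow]
    exact hθ.trans (by gcongr; exact le_self_pow₀ hX (by norm_num))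
  have hexp := mul_le_mul_of_nonneg_left (one_le_exp (by positivity : 0 ≤ 3 * (X * l)))
    (by positivity : 0 ≤ 5 * (X * l) ^ 3)
  rw [abs_le] at *
  constructor <;> nlinarith

/-- The velocity Hessian at the pole of `exp (logRatio · η)`. -/
def kolHess (η : E d × E d) : Matrix (Fin d) (Fin d) ℝ :=
  Matrix.vecMulVec (kolScore η) (kolScore η) - (2 : ℝ) • 1

lemma trace_kolHess (η : E d × E d) : (kolHess η).trace = ‖kolScore η‖ ^ 2 - 2 * d := by
  simp [kolHess, Matrix.trace_vecMulVec, dotProduct, EuclideanSpace.real_norm_sq_eq, ← sq]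

/-- The Taylor polynomial of kinetic degree two of `exp (logRatio · η)` at `0`. -/
def kolTaylor (η : E d × E d) : Z d → ℝ :=
  kpoly 1 (kolHess η).trace (fun i => -kolScore η i) (kolHess η)

lemma kolTaylor_eq (η : E d × E d) (ζ : Z d) :
    kolTaylor η ζ = 1 + -inner ℝ (kolScore η) ζ.2.2 +
      (‖kolScore η‖ ^ 2 * ζ.1 - 2 * d * ζ.1 - ‖ζ.2.2‖ ^ 2) +
      (-inner ℝ (kolScore η) ζ.2.2) ^ 2 / 2 := by
  have hinner : inner ℝ (kolScore η) ζ.2.2 = ∑ i, kolScore η i * ζ.2.2 i := by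
    simp [PiLp.inner_apply, mul_comm]
  have hquad : ∑ i, ∑ j, kolHess η i j * ζ.2.2 i * ζ.2.2 j =
      inner ℝ (kolScore η) ζ.2.2 ^ 2 - 2 * ‖ζ.2.2‖ ^ 2 := by
    rw [hinner, sq, Finset.sum_mul_sum, EuclideanSpace.real_norm_sq_eq, Finset.mul_sum,
      ← Finset.sum_sub_distrib]
    refine Finset.sum_congr rfl fun i _ => ?_
    simp only [kolHess, Matrix.sub_apply, Matrix.smul_apply, Matrix.one_apply,
      Matrix.vecMulVec_apply, smul_eq_mul, mul_ite, mul_one, mul_zero, sub_mul, ite_mul, zero_mul,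
      Finset.sum_sub_distrib, Finset.sum_ite_eq, Finset.mem_univ, if_true]
    congr 1
    · exact Finset.sum_congr rfl fun j _ => by ring
    · ring
  simp only [kolTaylor, kpoly, trace_kolHess, hquad, neg_mul, Finset.sum_neg_distrib,
    ← hinner]
  ring

lemma kpoly_trace_eq_sum (a : ℝ) (q : Fin d → ℝ) (M : Matrix (Fin d) (Fin d) ℝ) (z : Z d) :
    kpoly a M.trace q M z = a + ∑ i, q i * z.2.2 i +
      ∑ i, ∑ j, M i j * (z.2.2 i * z.2.2 j / 2 + if i = j then z.1 else 0) := by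
  have htrace : ∑ i, M i i * z.1 = M.trace * z.1 := by simp [Matrix.trace, Finset.sum_mul]
  have hhalf : ∑ i, ∑ j, M i j * (z.2.2 i * z.2.2 j / 2) =
      1 / 2 * ∑ i, ∑ j, M i j * z.2.2 i * z.2.2 j := by
    simp only [Finset.mul_sum]
    exact Finset.sum_congr rfl fun i _ => Finset.sum_congr rfl fun j _ => by ring
  simp only [kpoly, mul_add, mul_ite, mul_zero, Finset.sum_add_distrib, Finset.sum_ite_eq,
    Finset.mem_univ, if_true, htrace, hhalf]
  ring

section kpoly

variable {X : Type*} [MeasurableSpace X] {μ : Measure X} {φ : X → ℝ} {q : X → Fin d → ℝ}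
  {M : X → Matrix (Fin d) (Fin d) ℝ}

lemma integrable_mul_kpoly (hφ : Integrable φ μ) (hq : ∀ i, Integrable (fun x => φ x * q x i) μ)
    (hM : ∀ i j, Integrable (fun x => φ x * M x i j) μ) (z : Z d) :
    Integrable (fun x => φ x * kpoly 1 (M x).trace (q x) (M x) z) μ := by
  simp only [kpoly_trace_eq_sum, mul_add (φ _), mul_one, Finset.mul_sum, ← mul_assoc (φ _)]
  exact (hφ.add (integrable_finsetSum _ fun i _ => (hq i).mul_const _)).add
    (integrable_finsetSum _ fun i _ => integrable_finsetSum _ fun j _ => (hM i j).mul_const _)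

lemma integral_mul_kpoly (hφ : Integrable φ μ) (hq : ∀ i, Integrable (fun x => φ x * q x i) μ)
    (hM : ∀ i j, Integrable (fun x => φ x * M x i j) μ) (z : Z d) :
    ∫ x, φ x * kpoly 1 (M x).trace (q x) (M x) z ∂μ =
      kpoly (∫ x, φ x ∂μ) (Matrix.trace (.of fun i j => ∫ x, φ x * M x i j ∂μ))
        (fun i => ∫ x, φ x * q x i ∂μ) (.of fun i j => ∫ x, φ x * M x i j ∂μ) z := by
  have hqv (i : Fin d) (c : ℝ) : Integrable (fun x => φ x * q x i * c) μ := (hq i).mul_const c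
  have hMc (i j : Fin d) (c : ℝ) : Integrable (fun x => φ x * M x i j * c) μ :=
    (hM i j).mul_const c
  have hMi (i : Fin d) (c : Fin d → ℝ) : Integrable (fun x => ∑ j, φ x * M x i j * c j) μ :=
    integrable_finsetSum _ fun j _ => hMc i j _
  have hqs : Integrable (fun x => ∑ i, φ x * q x i * z.2.2 i) μ :=
    integrable_finsetSum _ fun i _ => hqv i _
  have hφq : Integrable (fun x => φ x + ∑ i, φ x * q x i * z.2.2 i) μ := hφ.add hqs
  simp only [kpoly_trace_eq_sum, mul_add (φ _), mul_one, Finset.mul_sum, ← mul_assoc (φ _)]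
  rw [integral_add hφq (integrable_finsetSum _ fun i _ => hMi i _), integral_add hφ hqs,
    integral_finsetSum _ fun i _ => hqv i _, integral_finsetSum _ fun i _ => hMi i _]
  congr 1
  · simp only [integral_mul_const]
  · refine Finset.sum_congr rfl fun i _ => ?_
    rw [integral_finsetSum _ fun j _ => hMc i j _]
    simp only [integral_mul_const, Matrix.of_apply]

end kpoly

lemma abs_exp_logRatio_sub_kolTaylor_le {l : ℝ} (hl₀ : 0 ≤ l) (hl : l ≤ 1 / 2) {ζ : Z d}
    (hζ : ζ ∈ kCyl l 0) (η : E d × E d) :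
    |exp (logRatio ζ η) - kolTaylor η ζ| ≤ 32 * ((4 * d + 2704) * weight η * l) ^ 3 *
      exp (3 * ((4 * d + 2704) * weight η * l)) := by
  obtain ⟨hs, hs₀, -, hu⟩ := mem_kCyl_zero.1 hζ
  have hw := one_le_weight η
  have hd : (0 : ℝ) ≤ d := d.cast_nonneg
  have hdw : 0 ≤ d * weight η := mul_nonneg hd (zero_le_one.trans hw)
  rw [kolTaylor_eq]
  refine abs_exp_sub_graded_taylor_two_le (by nlinarith) hl₀ (by linarith) ?_ ?_ ?_
  · rw [abs_neg]
    refine abs_real_inner_le_of_norm_le ((norm_kolScore_le η).trans ?_) hu.le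
    linarith
  · have hA : 0 ≤ 16 * weight η - ‖kolScore η‖ ^ 2 := sub_nonneg.2 (sq_norm_kolScore_le η)
    have hu₂ : ‖ζ.2.2‖ ^ 2 ≤ l ^ 2 := by gcongr
    have hsw : (16 * weight η + 2 * d) * -ζ.1 ≤ (16 * weight η + 2 * d) * l ^ 2 := by
      gcongr
      linarith
    have hdl : 2 * d * l ^ 2 ≤ 2 * (d * weight η) * l ^ 2 := by
      gcongr
      exact le_mul_of_one_le_right hd hw
    have hwl : l ^ 2 ≤ weight η * l ^ 2 := le_mul_of_one_le_left (sq_nonneg l) hw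
    have := mul_nonneg hA (neg_nonneg.2 hs₀)
    have := mul_nonneg hd (neg_nonneg.2 hs₀)
    have := mul_nonneg (sq_nonneg ‖kolScore η‖) (neg_nonneg.2 hs₀)
    have := mul_nonneg hdw (sq_nonneg l)
    rw [abs_le]
    constructor <;> linarith [sq_nonneg ‖ζ.2.2‖, sq_nonneg l]
  · exact (abs_logRatio_sub_le hl₀ hl hζ η).trans_eq (by ring)

lemma exists_abs_exp_logRatio_sub_kolTaylor_mul_kolKernel_le (d : ℕ) :
    ∃ C δ : ℝ, 0 ≤ C ∧ 0 < δ ∧ δ ≤ 1 / 2 ∧ ∀ l, 0 ≤ l → l ≤ δ → ∀ ζ ∈ kCyl l (0 : Z d), ∀ η,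
      |exp (logRatio ζ η) - kolTaylor η ζ| * kolKernel η ≤
        C * l ^ 3 * (weight η ^ 3 * exp (-(1 / 16) * weight η)) := by
  obtain ⟨C, hC, hkernel⟩ := exists_kolKernel_le d
  have hD : (2704 : ℝ) ≤ 4 * d + 2704 := by linarith [(d.cast_nonneg : (0 : ℝ) ≤ d)]
  have habs {l} (hl₀ : 0 ≤ l) (hl : l ≤ 1 / 2) {ζ : Z d} (hζ : ζ ∈ kCyl l 0) (η : E d × E d) :=
    abs_exp_logRatio_sub_kolTaylor_le hl₀ hl hζ η
  generalize (4 * d + 2704 : ℝ) = D at hD habs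
  have hδ : 1 / (48 * D) ≤ 1 / 2 := by
    gcongr
    linarith
  refine ⟨32 * D ^ 3 * C, 1 / (48 * D), by positivity, by positivity, hδ,
    fun l hl₀ hl ζ hζ η => ?_⟩
  have hw := weight_pos η
  have hDl : D * l ≤ 1 / 48 := by
    rw [le_div_iff₀ (by positivity)] at hl ⊢
    linarith
  have hexp : exp (3 * (D * weight η * l)) ≤ exp (1 / 16 * weight η) :=
    exp_le_exp.2 (by nlinarith)
  calc |exp (logRatio ζ η) - kolTaylor η ζ| * kolKernel η
      ≤ 32 * (D * weight η * l) ^ 3 * exp (1 / 16 * weight η) *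
          (C * exp (-(1 / 8) * weight η)) := by
        gcongr
        · exact (kolKernel_pos η).le
        · exact (habs hl₀ (hl.trans hδ) hζ η).trans (by gcongr)
        · exact hkernel η
    _ = 32 * D ^ 3 * C * l ^ 3 * (weight η ^ 3 *
          (exp (1 / 16 * weight η) * exp (-(1 / 8) * weight η))) := by ring
    _ = 32 * D ^ 3 * C * l ^ 3 * (weight η ^ 3 * exp (-(1 / 16) * weight η)) := by
      rw [← exp_add]
      ring_nf

lemma abs_kolScore_apply_le (η : E d × E d) (i : Fin d) : |kolScore η i| ≤ 4 * weight η :=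
  (PiLp.norm_apply_le (kolScore η) i).trans (norm_kolScore_le η)

lemma abs_kolHess_apply_le (η : E d × E d) (i j : Fin d) : |kolHess η i j| ≤ 18 * weight η ^ 2 := by
  have hw := one_le_weight η
  have hone : |(1 : Matrix (Fin d) (Fin d) ℝ) i j| ≤ 1 := by
    rw [Matrix.one_apply]
    split_ifs <;> simp
  calc |kolHess η i j|
      ≤ |kolScore η i * kolScore η j| + |2 * (1 : Matrix (Fin d) (Fin d) ℝ) i j| := abs_sub _ _
    _ ≤ 4 * weight η * (4 * weight η) + 2 * 1 := by
      rw [abs_mul, abs_mul, abs_two]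
      gcongr
      exacts [abs_kolScore_apply_le η i, abs_kolScore_apply_le η j]
    _ ≤ 18 * weight η ^ 2 := by nlinarith

lemma continuous_kolHess_apply (i j : Fin d) :
    Continuous fun η : E d × E d => kolHess η i j := by
  simp only [kolHess, Matrix.sub_apply, Matrix.vecMulVec_apply, Matrix.smul_apply]
  fun_prop

@[fun_prop]
lemma continuous_kolTaylor_apply (ζ : Z d) : Continuous fun η => kolTaylor η ζ := by
  simp only [kolTaylor_eq]
  fun_prop

section taylor

variable {f : E d × E d → ℝ} {M : ℝ}

lemma integrable_mul_kolKernel_mul {h : E d × E d → ℝ} {C : ℝ} {k m : ℕ} (hf : Continuous f)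
    (hM : ∀ η, |f η| ≤ M * weight η ^ k) (hh : Continuous h)
    (hC : ∀ η, |h η| ≤ C * weight η ^ m) :
    Integrable fun η => f η * kolKernel η * h η := by
  have hfh (η : E d × E d) : |f η * h η| ≤ M * C * weight η ^ (k + m) := by
    rw [abs_mul]
    exact (mul_le_mul (hM η) (hC η) (abs_nonneg _) ((abs_nonneg _).trans (hM η))).trans_eq
      (by ring)
  exact (integrable_mul_kolKernel (by fun_prop) hfh).congr (ae_of_all _ fun η => by ring)

lemma integrable_mul_kolScore (hf : Continuous f) (hM : ∀ η, |f η| ≤ M * weight η ^ 2)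
    (i : Fin d) : Integrable fun η => f η * kolKernel η * -kolScore η i :=
  integrable_mul_kolKernel_mul hf hM (by fun_prop) fun η => by
    rw [abs_neg, pow_one]
    exact abs_kolScore_apply_le η i

lemma integrable_mul_kolHess (hf : Continuous f) (hM : ∀ η, |f η| ≤ M * weight η ^ 2)
    (i j : Fin d) : Integrable fun η => f η * kolKernel η * kolHess η i j :=
  integrable_mul_kolKernel_mul hf hM (continuous_kolHess_apply i j) fun η =>
    abs_kolHess_apply_le η i j

lemma integrable_mul_kolTaylor (hf : Continuous f) (hM : ∀ η, |f η| ≤ M * weight η ^ 2)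
    (ζ : Z d) : Integrable fun η => f η * kolKernel η * kolTaylor η ζ :=
  integrable_mul_kpoly (integrable_mul_kolKernel hf hM) (integrable_mul_kolScore hf hM)
    (integrable_mul_kolHess hf hM) ζ

lemma exists_integral_mul_kolTaylor_eq_kpoly (hf : Continuous f)
    (hM : ∀ η, |f η| ≤ M * weight η ^ 2) :
    ∃ a q N, ∀ ζ : Z d, ∫ η, f η * kolKernel η * kolTaylor η ζ =
      kpoly a (Matrix.trace N) q N ζ :=
  ⟨_, _, _, integral_mul_kpoly (integrable_mul_kolKernel hf hM) (integrable_mul_kolScore hf hM)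
    (integrable_mul_kolHess hf hM)⟩

lemma exists_abs_kolSol_sub_kpoly_le (d : ℕ) :
    ∃ C δ : ℝ, 0 ≤ C ∧ 0 < δ ∧ δ ≤ 1 / 2 ∧ ∀ (f : E d × E d → ℝ) (M : ℝ), Continuous f →
      (∀ η, |f η| ≤ M * weight η ^ 2) → ∃ a q N, ∀ l, 0 ≤ l → l ≤ δ → ∀ ζ ∈ kCyl l (0 : Z d),
        |kolSol f ζ - kpoly a (Matrix.trace N) q N ζ| ≤ C * M * l ^ 3 := by
  obtain ⟨C, δ, hC, hδ₀, hδ, hkernel⟩ := exists_abs_exp_logRatio_sub_kolTaylor_mul_kolKernel_le d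
  have hw (η : E d × E d) : 0 ≤ weight η ^ 5 * exp (-(1 / 16) * weight η) :=
    mul_nonneg (pow_pos (weight_pos η) 5).le (exp_pos _).le
  have hint : Integrable fun η : E d × E d => weight η ^ 5 * exp (-(1 / 16) * weight η) :=
    integrable_weight_pow_mul_exp (by norm_num) 5
  refine ⟨C * ∫ η : E d × E d, weight η ^ 5 * exp (-(1 / 16) * weight η), δ,
    mul_nonneg hC (integral_nonneg hw), hδ₀, hδ, fun f M hf hM => ?_⟩
  obtain ⟨a, q, N, hN⟩ := exists_integral_mul_kolTaylor_eq_kpoly hf hM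
  refine ⟨a, q, N, fun l hl₀ hl ζ hζ => ?_⟩
  have hζ₁ : -1 < ζ.1 := by nlinarith [(mem_kCyl_zero.1 hζ).1]
  have hbound (η : E d × E d) :
      ‖f η * (exp (logRatio ζ η) * kolKernel η) - f η * kolKernel η * kolTaylor η ζ‖ ≤
        M * C * l ^ 3 * (weight η ^ 5 * exp (-(1 / 16) * weight η)) := by
    calc _ = |f η| * (|exp (logRatio ζ η) - kolTaylor η ζ| * kolKernel η) := by
          rw [← abs_of_pos (kolKernel_pos η), ← abs_mul, ← abs_mul, Real.norm_eq_abs,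
            abs_of_pos (kolKernel_pos η)]
          ring_nf
      _ ≤ M * weight η ^ 2 * (C * l ^ 3 * (weight η ^ 3 * exp (-(1 / 16) * weight η))) :=
          mul_le_mul (hM η) (hkernel l hl₀ hl ζ hζ η)
            (mul_nonneg (abs_nonneg _) (kolKernel_pos η).le) ((abs_nonneg _).trans (hM η))
      _ = _ := by ring
  have hbound' := hint.const_mul (M * C * l ^ 3)
  have htaylor := integrable_mul_kolTaylor hf hM ζ
  have hsol : Integrable fun η => f η * (exp (logRatio ζ η) * kolKernel η) :=
    ((hbound'.mono' (Continuous.aestronglyMeasurable (by fun_prop)) (ae_of_all _ hbound)).add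
      htaylor).congr (ae_of_all _ fun η => sub_add_cancel _ _)
  rw [kolSol_eq_integral_exp_logRatio f hζ₁, ← hN, ← integral_sub hsol htaylor]
  refine (norm_integral_le_of_norm_le hbound' (ae_of_all _ hbound)).trans_eq ?_
  rw [integral_const_mul]
  ring

lemma hasKolmogorovAt_kolSol (hf : Continuous f) (hM : ∀ η, |f η| ≤ M * weight η ^ 2) {z : Z d}
    (hz : -1 < z.1) : HasKolmogorovAt (kolSol f) 0 z := by
  set σ := √(z.1 + 1)
  have hσ : 0 < σ := sqrt_pos.2 (by linarith)
  obtain ⟨C, δ, -, hδ₀, hδ, hexp⟩ := exists_abs_kolSol_sub_kpoly_le d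
  obtain ⟨a, q, N, hN⟩ := hexp (fun η => f (kinMap z σ (-1, η)).2) _
    (hf.comp ((continuous_kinMap z σ).comp (by fun_prop)).snd) (abs_comp_kinMap_le hM z σ)
  have hlocal : HasKolmogorovAt
      (fun ζ => kolSol f (kinMap z σ ζ) - kpoly a (Matrix.trace N) q N ζ) 0 (0 : Z d) := by
    refine .zero_of_abs_le_cube (C := C * (M * (8 * (1 + σ ^ 2) ^ 3 * weight z.2) ^ 2)) hδ₀
      fun l hl₀ hl ζ hζ => ?_
    have hζ₁ : -1 ≤ ζ.1 := by nlinarith [(mem_kCyl_zero.1 hζ).1]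
    rw [kolSol_kinMap f z hσ.le (sq_sqrt (by linarith)) hζ₁]
    exact hN l hl₀.le hl ζ hζ
  have hcomp := hlocal.add (hasKolmogorovAt_kpoly a (Matrix.trace N) q N 0)
  simp only [sub_add_cancel, sub_self, add_zero] at hcomp
  simpa only [mul_zero, kinMap_zero] using hcomp.of_comp_kinMap hσ.ne'

end taylor

lemma abs_sub_kolSol_le {w ℓ : Z d → ℝ} {K C : ℝ} (hK : 0 ≤ K) (hw : Continuous w)
    (hwℓ : ∀ z, HasKolmogorovAt w (ℓ z) z)
    (hℓ : ∀ z, -1 ≤ z.1 → z.1 ≤ 0 → |ℓ z| ≤ K * weight z.2)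
    (hgrowth : ∀ z, -1 ≤ z.1 → z.1 ≤ 0 → |w z| ≤ C * weight z.2 ^ 2) (z : Z d) (hz : -1 ≤ z.1)
    (hz₀ : z.1 ≤ 0) :
    |w z - kolSol (fun η => w (-1, η)) z| ≤ K * (exp (barrierRate d 1) * weight z.2) := by
  have hf : Continuous fun η => w (-1, η) := by fun_prop
  have hfC (η : E d × E d) : |w (-1, η)| ≤ C * weight η ^ 2 := hgrowth (-1, η) le_rfl (by norm_num)
  have hcont := continuous_kolSol hf hfC
  have hdiff {y : Z d} (hy : -1 < y.1) :
      HasKolmogorovAt (fun z => w z - kolSol (fun η => w (-1, η)) z) (ℓ y) y := by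
    simpa only [sub_zero] using (hwℓ y).sub (hasKolmogorovAt_kolSol hf hfC hy)
  obtain ⟨C', -, hC'⟩ := exists_abs_kolSol_le d
  have hdiff_growth (y : Z d) (hy : -1 ≤ y.1) (hy₀ : y.1 ≤ 0) :
      |w y - kolSol (fun η => w (-1, η)) y| ≤ (C + C' * C) * weight y.2 ^ 2 :=
    (abs_sub _ _).trans <| (add_le_add (hgrowth y hy hy₀) (hC' _ _ hfC y hy₀)).trans_eq (by ring)
  refine abs_le'.2 ⟨?_, ?_⟩
  · refine le_of_subsolution_of_growth hK (hw.fun_sub hcont)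
      (fun y hy hy₀ => ⟨ℓ y, (le_abs_self _).trans (hℓ y hy.le hy₀), hdiff hy⟩) (fun η => ?_)
      (fun y hy hy₀ => (le_abs_self _).trans (hdiff_growth y hy hy₀)) z hz hz₀
    rw [kolSol_initial, sub_self]
  · refine le_of_subsolution_of_growth hK (hw.fun_sub hcont).fun_neg
      (fun y hy hy₀ => ⟨-ℓ y, (neg_le_abs _).trans (hℓ y hy.le hy₀), (hdiff hy).neg⟩) (fun η => ?_)
      (fun y hy hy₀ => (neg_le_abs _).trans (hdiff_growth y hy hy₀)) z hz hz₀
    rw [kolSol_initial, sub_self, neg_zero]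

/-- Adding a multiple of `t + 1`, which vanishes on the initial slice, to the polynomial adjusts its
source to `ℓ` without affecting the bound there. -/
lemma exists_kinPoly_hasKolmogorovAt {g : Z d → ℝ} {N : ℝ}
    (h : ∀ r, 1 ≤ r → ∃ p ∈ kinPoly d, ∀ z ∈ kCyl r 0, |g z - p z| ≤ N * r ^ 3) (ℓ : ℝ) :
    ∃ p ∈ kinPoly d, (∀ z, HasKolmogorovAt p ℓ z) ∧
      (∀ η, |g (-1, η) - p (-1, η)| ≤ 1152 * N * weight η ^ 2) ∧
      ∃ C, ∀ z : Z d, -1 ≤ z.1 → z.1 ≤ 0 → |g z - p z| ≤ C * weight z.2 ^ 2 := by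
  obtain ⟨p, hp, hgp⟩ := exists_kinPoly_abs_sub_le_weight h
  obtain ⟨c, hc⟩ := kinPoly.exists_hasKolmogorovAt hp
  have hpoly (z : Z d) : kpoly (ℓ - c) (ℓ - c) 0 0 z = (ℓ - c) * (z.1 + 1) := by
    simp [kpoly, mul_add, add_comm]
  refine ⟨fun z => p z + kpoly (ℓ - c) (ℓ - c) 0 0 z, add_mem hp ⟨_, _, _, _, rfl⟩, fun z => ?_,
    fun η => ?_, 1152 * N + |ℓ - c|, fun z hz hz₀ => ?_⟩
  · simpa using (hc z).add (hasKolmogorovAt_kpoly (ℓ - c) (ℓ - c) 0 0 z)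
  · simpa [hpoly] using hgp (-1, η) le_rfl (by norm_num)
  · have hw : 1 ≤ weight z.2 ^ 2 := one_le_pow₀ (one_le_weight z.2)
    simp only [hpoly, ← sub_sub, add_mul]
    refine (abs_sub _ _).trans (add_le_add (hgp z hz hz₀) ?_)
    rw [abs_mul, abs_of_nonneg (by linarith : 0 ≤ z.1 + 1)]
    gcongr
    linarith

lemma mem_kCyl_two_mul_weight {z : Z d} (hz : -1 ≤ z.1) (hz₀ : z.1 ≤ 0) :
    z ∈ kCyl (2 * weight z.2) 0 := by
  have hw := one_le_weight z.2
  refine mem_kCyl_zero.2 ⟨by nlinarith, hz₀, ?_, by linarith [norm_snd_le_weight z.2]⟩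
  calc ‖z.2.1‖ < 2 * weight z.2 := by linarith [norm_fst_le_weight z.2]
    _ ≤ (2 * weight z.2) ^ 3 := le_self_pow₀ (by linarith) (by norm_num)

lemma weight_le_three {l : ℝ} (hl₀ : 0 ≤ l) (hl : l ≤ 1) {z : Z d} (hz : z ∈ kCyl l 0) :
    weight z.2 ≤ 3 := by
  obtain ⟨-, -, hx, hv⟩ := mem_kCyl_zero.1 hz
  have hx' := pow_le_one₀ (n := 2) (norm_nonneg _) (hx.le.trans (pow_le_one₀ hl₀ hl))
  have hv' := pow_le_one₀ (n := 2) (norm_nonneg _) (hv.le.trans hl)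
  unfold weight
  linarith

lemma exists_kinPoly_abs_sub_le_unit (d : ℕ) :
    ∃ C δ : ℝ, 0 < C ∧ 0 < δ ∧ ∀ (g S : Z d → ℝ) (N K : ℝ), 0 ≤ N → 0 ≤ K → Continuous g →
      (∀ z, HasKolmogorovAt g (S z) z) →
      (∀ r, 1 ≤ r → ∃ p ∈ kinPoly d, ∀ z ∈ kCyl r 0, |g z - p z| ≤ N * r ^ 3) →
      (∀ r, 1 ≤ r → ∀ z ∈ kCyl r 0, |S z - S 0| ≤ K * r) →
      ∃ p ∈ kinPoly d, ∀ l, 0 ≤ l → l ≤ δ → ∀ z ∈ kCyl l 0,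
        |g z - p z| ≤ C * (N * l ^ 3 + K) := by
  obtain ⟨C, δ, hC, hδ₀, hδ, hexp⟩ := exists_abs_kolSol_sub_kpoly_le d
  refine ⟨1152 * C + 6 * exp (barrierRate d 1), δ, by positivity, hδ₀,
    fun g S N K hN hK hg hgS hgrowth hS => ?_⟩
  obtain ⟨p, hp, hpS, hinit, C', hC'⟩ := exists_kinPoly_hasKolmogorovAt hgrowth (S 0)
  have hw : Continuous fun z => g z - p z := hg.sub (kinPoly.continuous hp)
  obtain ⟨a, q, M, hM⟩ := hexp (fun η => g (-1, η) - p (-1, η)) _ (hw.comp (by fun_prop)) hinit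
  refine ⟨fun z => p z + kpoly a (Matrix.trace M) q M z, add_mem hp ⟨_, _, _, _, rfl⟩,
    fun l hl₀ hl z hz => ?_⟩
  obtain ⟨ht, ht₀, -, -⟩ := mem_kCyl_zero.1 hz
  have hsource (y : Z d) (hy : -1 ≤ y.1) (hy₀ : y.1 ≤ 0) : |S y - S 0| ≤ 2 * K * weight y.2 :=
    (hS _ (by linarith [one_le_weight y.2]) y (mem_kCyl_two_mul_weight hy hy₀)).trans_eq (by ring)
  have hcompare := abs_sub_kolSol_le (by positivity : 0 ≤ 2 * K) hw (fun y => (hgS y).sub (hpS y))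
    hsource hC' z (by nlinarith) ht₀
  calc |g z - (p z + kpoly a (Matrix.trace M) q M z)|
      ≤ |g z - p z - kolSol (fun η => g (-1, η) - p (-1, η)) z| +
        |kolSol (fun η => g (-1, η) - p (-1, η)) z - kpoly a (Matrix.trace M) q M z| := by
        rw [← sub_sub]
        exact abs_sub_le _ _ _
    _ ≤ 2 * K * (exp (barrierRate d 1) * 3) + C * (1152 * N) * l ^ 3 := by
        refine add_le_add (hcompare.trans ?_) (hM l hl₀ hl z hz)
        gcongr
        exact weight_le_three hl₀ (by linarith) hz
    _ ≤ (1152 * C + 6 * exp (barrierRate d 1)) * (N * l ^ 3 + K) := by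
        have h₁ : 0 ≤ C * K := mul_nonneg hC hK
        have h₂ : 0 ≤ exp (barrierRate d 1) * (N * l ^ 3) := by positivity
        linarith

/-- The inequality `[g]_{C_ℓ^{2+α}} ≤ N` on the whole space, in terms of real-valued errors. -/
def HasKinApprox (α : ℝ) (g : Z d → ℝ) (N : ℝ) : Prop :=
  ∀ z₀ r, 0 < r → ∃ p ∈ kinPoly d, ∀ z ∈ kCyl r z₀, |g z - p z| ≤ N * r ^ (2 + α)

section seminorms

variable {α : ℝ} {g S : Z d → ℝ}

lemma hasKinApprox_of_kSemi2_lt {N : ℝ} (h : kSemi2 α Set.univ g < ENNReal.ofReal N) :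
    HasKinApprox α g N := by
  intro z₀ r hr
  have hN : 0 < N := ENNReal.ofReal_pos.1 (bot_le.trans_lt h)
  have hr' : 0 < r ^ (2 + α) := rpow_pos_of_pos hr _
  have hcyl : (⨅ (a : ℝ) (b : ℝ) (q : Fin d → ℝ) (M : Matrix (Fin d) (Fin d) ℝ),
      ⨆ z ∈ kCyl r z₀, ENNReal.ofReal |g z - kpoly a b q M z|) / ENNReal.ofReal (r ^ (2 + α)) <
        ENNReal.ofReal N :=
    lt_of_le_of_lt (le_iSup₂_of_le z₀ (Set.mem_univ _)
      (le_iSup₂_of_le r hr (le_iSup (fun _ : kCyl r z₀ ⊆ Set.univ => _) (Set.subset_univ _)))) h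
  rw [ENNReal.div_lt_iff (.inl (ENNReal.ofReal_pos.2 hr').ne') (.inl ENNReal.ofReal_ne_top),
    ← ENNReal.ofReal_mul hN.le] at hcyl
  simp only [iInf_lt_iff] at hcyl
  obtain ⟨a, b, q, M, hlt⟩ := hcyl
  exact ⟨_, ⟨a, b, q, M, rfl⟩, fun z hz => (ENNReal.ofReal_le_ofReal_iff (by positivity)).1
    ((le_iSup₂ (f := fun z (_ : z ∈ kCyl r z₀) => ENNReal.ofReal |g z - kpoly a b q M z|) z
      hz).trans hlt.le)⟩

lemma kSemi2_le_ofReal {N : ℝ} (hN : 0 ≤ N) (h : HasKinApprox α g N) :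
    kSemi2 α Set.univ g ≤ ENNReal.ofReal N := by
  refine iSup₂_le fun z₀ _ => iSup₂_le fun r hr => iSup_le fun _ => ?_
  obtain ⟨_, ⟨a, b, q, M, rfl⟩, hp⟩ := h z₀ r hr
  refine ENNReal.div_le_of_le_mul ?_
  rw [← ENNReal.ofReal_mul hN]
  exact iInf₂_le_of_le a b (iInf₂_le_of_le q M
    (iSup₂_le fun z hz => ENNReal.ofReal_le_ofReal (hp z hz)))

lemma abs_sub_le_kHolder (hS : kHolder α Set.univ S ≠ ⊤) {z₀ z : Z d} {r : ℝ} (hr : 0 < r)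
    (hz : z ∈ kCyl r z₀) : |S z - S z₀| ≤ (kHolder α Set.univ S).toReal * r ^ α := by
  have h : ENNReal.ofReal (|S z - S z₀| / r ^ α) ≤ kHolder α Set.univ S :=
    le_iSup₂_of_le z₀ (Set.mem_univ _) (le_iSup₂_of_le r hr
      (le_iSup_of_le (Set.subset_univ _) (le_iSup₂_of_le z hz le_rfl)))
  exact (div_le_iff₀ (rpow_pos_of_pos hr α)).1 ((ENNReal.ofReal_le_iff_le_toReal hS).1 h)

end seminorms

section scaling

variable {α N K : ℝ} {g S : Z d → ℝ}

lemma HasKinApprox.exists_comp_kinMap (h : HasKinApprox α g N) (hα : α ≤ 1) (hN : 0 ≤ N) (z₀ : Z d)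
    {ρ : ℝ} (hρ : 0 < ρ) {R : ℝ} (hR : 1 ≤ R) :
    ∃ p ∈ kinPoly d, ∀ ζ ∈ kCyl R 0, |g (kinMap z₀ ρ ζ) - p ζ| ≤ N * ρ ^ (2 + α) * R ^ 3 := by
  have hR₀ : 0 < R := zero_lt_one.trans_le hR
  obtain ⟨p, hp, hgp⟩ := h z₀ (ρ * R) (mul_pos hρ hR₀)
  refine ⟨_, kinPoly.comp_kinMap hp z₀ ρ, fun ζ hζ => ?_⟩
  have hpow : R ^ (2 + α) ≤ R ^ 3 := by
    rw [← rpow_natCast]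
    exact rpow_le_rpow_of_exponent_le hR (by push_cast; linarith)
  calc |g (kinMap z₀ ρ ζ) - p (kinMap z₀ ρ ζ)| ≤ N * (ρ * R) ^ (2 + α) :=
        hgp _ ((kinMap_mem_kCyl_iff z₀ ζ hρ R).2 hζ)
    _ = N * ρ ^ (2 + α) * R ^ (2 + α) := by rw [mul_rpow hρ.le hR₀.le, mul_assoc]
    _ ≤ N * ρ ^ (2 + α) * R ^ 3 := by gcongr

lemma abs_sub_comp_kinMap_le
    (h : ∀ z₀ z r, 0 < r → z ∈ kCyl r z₀ → |S z - S z₀| ≤ K * r ^ α) (hα : α ≤ 1) (hK : 0 ≤ K)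
    (z₀ : Z d) {ρ : ℝ} (hρ : 0 < ρ) {R : ℝ} (hR : 1 ≤ R) {ζ : Z d} (hζ : ζ ∈ kCyl R 0) :
    |ρ ^ 2 * S (kinMap z₀ ρ ζ) - ρ ^ 2 * S (kinMap z₀ ρ 0)| ≤ K * ρ ^ (2 + α) * R := by
  have hR₀ : 0 < R := zero_lt_one.trans_le hR
  have hosc := h z₀ _ (ρ * R) (mul_pos hρ hR₀) ((kinMap_mem_kCyl_iff z₀ ζ hρ R).2 hζ)
  rw [kinMap_zero, ← mul_sub, abs_mul, abs_of_pos (pow_pos hρ 2)]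
  calc ρ ^ 2 * |S (kinMap z₀ ρ ζ) - S z₀| ≤ ρ ^ 2 * (K * (ρ * R) ^ α) := by gcongr
    _ = K * ρ ^ (2 + α) * R ^ α := by
      rw [mul_rpow hρ.le hR₀.le, rpow_add hρ, rpow_two]
      ring
    _ ≤ K * ρ ^ (2 + α) * R := by
      gcongr
      exact rpow_le_self_of_one_le hR hα

lemma exists_hasKinApprox_of_scale (d : ℕ) :
    ∃ C δ : ℝ, 0 < C ∧ 0 < δ ∧ ∀ (α N K : ℝ) (g S : Z d → ℝ), α ≤ 1 → 0 ≤ N → 0 ≤ K →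
      Continuous g → (∀ z, HasKolmogorovAt g (S z) z) → HasKinApprox α g N →
      (∀ z₀ z r, 0 < r → z ∈ kCyl r z₀ → |S z - S z₀| ≤ K * r ^ α) →
      ∀ l, 0 < l → l ≤ δ → HasKinApprox α g (C * (N * l ^ 3 + K) / l ^ (2 + α)) := by
  obtain ⟨C, δ, hC, hδ, hunit⟩ := exists_kinPoly_abs_sub_le_unit d
  refine ⟨C, δ, hC, hδ, fun α N K g S hα hN hK hg hgS hgN hS l hl hlδ z₀ r hr => ?_⟩
  obtain ⟨ρ, hρ, rfl⟩ : ∃ ρ, 0 < ρ ∧ r = ρ * l := ⟨r / l, div_pos hr hl, by field_simp⟩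
  obtain ⟨p, hp, hgp⟩ := hunit (fun ζ => g (kinMap z₀ ρ ζ)) (fun ζ => ρ ^ 2 * S (kinMap z₀ ρ ζ))
    (N * ρ ^ (2 + α)) (K * ρ ^ (2 + α)) (by positivity) (by positivity)
    (hg.comp (continuous_kinMap z₀ ρ)) (fun ζ => (hgS _).comp_kinMap hρ.ne')
    (fun R hR => hgN.exists_comp_kinMap hα hN z₀ hρ hR)
    (fun R hR ζ hζ => abs_sub_comp_kinMap_le hS hα hK z₀ hρ hR hζ)
  obtain ⟨z₁, hz₁⟩ := exists_kinMap_inverse z₀ hρ.ne'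
  refine ⟨_, kinPoly.comp_kinMap hp z₁ ρ⁻¹, fun z hz => ?_⟩
  have hζ : kinMap z₁ ρ⁻¹ z ∈ kCyl l 0 := by
    rwa [← kinMap_mem_kCyl_iff z₀ _ hρ, hz₁.2 z]
  calc |g z - p (kinMap z₁ ρ⁻¹ z)|
      ≤ C * (N * ρ ^ (2 + α) * l ^ 3 + K * ρ ^ (2 + α)) := by
        simpa only [hz₁.2 z] using hgp l hl.le hlδ _ hζ
    _ = C * (N * l ^ 3 + K) / l ^ (2 + α) * (ρ * l) ^ (2 + α) := by
        rw [mul_rpow hρ.le hl.le]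
        field_simp

lemma exists_scale_mul_pow_le (hα : α < 1) (C : ℝ) {δ : ℝ} (hδ : 0 < δ) :
    ∃ l, 0 < l ∧ l ≤ δ ∧ C * l ^ 3 / l ^ (2 + α) ≤ 1 / 2 := by
  have hlim : Tendsto (fun l : ℝ => C * l ^ (1 - α)) (𝓝[>] 0) (𝓝 0) := by
    have hcont : Continuous fun l : ℝ => C * l ^ (1 - α) :=
      continuous_const.mul (continuous_rpow_const (by linarith))
    simpa [zero_rpow (by linarith : 1 - α ≠ 0)] using
      (hcont.tendsto 0).mono_left nhdsWithin_le_nhds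
  obtain ⟨l, ⟨hl₀, hl⟩, hCl⟩ := (Eventually.and (Ioc_mem_nhdsGT hδ)
    (hlim.eventually_le_const (by norm_num : (0 : ℝ) < 1 / 2))).exists
  refine ⟨l, hl₀, hl, ?_⟩
  rwa [mul_div_assoc, ← rpow_natCast, ← rpow_sub hl₀,
    show ((3 : ℕ) : ℝ) - (2 + α) = 1 - α by push_cast; ring]

lemma exists_hasKinApprox_half_add (d : ℕ) (hα : α < 1) :
    ∃ C, 0 < C ∧ ∀ (N K : ℝ) (g S : Z d → ℝ), 0 ≤ N → 0 ≤ K → Continuous g →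
      (∀ z, HasKolmogorovAt g (S z) z) → HasKinApprox α g N →
      (∀ z₀ z r, 0 < r → z ∈ kCyl r z₀ → |S z - S z₀| ≤ K * r ^ α) →
      HasKinApprox α g (N / 2 + C * K) := by
  obtain ⟨C, δ, hC, hδ, hscale⟩ := exists_hasKinApprox_of_scale d
  obtain ⟨l, hl₀, hl, hCl⟩ := exists_scale_mul_pow_le hα C hδ
  refine ⟨C / l ^ (2 + α), by positivity, fun N K g S hN hK hg hgS hgN hS z₀ r hr => ?_⟩
  obtain ⟨p, hp, hgp⟩ := hscale α N K g S hα.le hN hK hg hgS hgN hS l hl₀ hl z₀ r hr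
  refine ⟨p, hp, fun z hz => (hgp z hz).trans ?_⟩
  gcongr
  calc C * (N * l ^ 3 + K) / l ^ (2 + α)
      = C * l ^ 3 / l ^ (2 + α) * N + C / l ^ (2 + α) * K := by ring
    _ ≤ 1 / 2 * N + C / l ^ (2 + α) * K := by gcongr
    _ = N / 2 + C / l ^ (2 + α) * K := by ring

end scaling

theorem schauder_estimate_kolmogorov_general (d : ℕ) {α : ℝ} (hα : α < 1) :
    ∃ C : ℝ, 0 < C ∧ ∀ S g : Z d → ℝ, Continuous g → (∀ z, HasKolmogorovAt g (S z) z) →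
      kSemi2 α Set.univ g < ⊤ →
      kSemi2 α Set.univ g ≤ ENNReal.ofReal C * kHolder α Set.univ S := by
  obtain ⟨C, hC, habsorb⟩ := exists_hasKinApprox_half_add d hα
  refine ⟨2 * C, by positivity, fun S g hg hgS hfin => ?_⟩
  rcases eq_or_ne (kHolder α Set.univ S) ⊤ with htop | hS
  · simp [htop, hC]
  have hle : (kSemi2 α Set.univ g).toReal ≤ 2 * C * (kHolder α Set.univ S).toReal := by
    refine le_of_forall_pos_le_add fun ε hε => ?_
    have hlt : kSemi2 α Set.univ g < ENNReal.ofReal ((kSemi2 α Set.univ g).toReal + ε) :=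
      (ENNReal.lt_ofReal_iff_toReal_lt hfin.ne).2 (lt_add_of_pos_right _ hε)
    have hhalf := habsorb _ _ g S (by positivity) ENNReal.toReal_nonneg hg hgS
      (hasKinApprox_of_kSemi2_lt hlt) fun z₀ z r hr hz => abs_sub_le_kHolder hS hr hz
    have := ENNReal.toReal_le_of_le_ofReal (by positivity) (kSemi2_le_ofReal (by positivity) hhalf)
    linarith
  rw [← ENNReal.ofReal_toReal hfin.ne, ← ENNReal.ofReal_toReal hS,
    ← ENNReal.ofReal_mul (by positivity)]
  exact ENNReal.ofReal_le_ofReal hle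

/-- **Schauder estimate for the Kolmogorov equation**: any solution of
`(∂_t + v·∇_x) g = Δ_v g + S` on the whole space with `[g]_{C_ℓ^{2+α}} < ∞` satisfies
`[g]_{C_ℓ^{2+α}} ≤ C [S]_{C_ℓ^α}`, with `C = C(d, α)`. -/
theorem schauder_estimate_kolmogorov
    (d : ℕ) (hd : 1 ≤ d) (α : ℝ) (hα0 : 0 < α) (hα1 : α < 1) :
    ∃ C : ℝ, 0 < C ∧
      ∀ (S g : Z d → ℝ),
        kHolder α Set.univ S < ⊤ →
        KinReg g Set.univ →
        (∀ z : Z d, Yop g z = (∑ i, pvv g i i z) + S z) →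
        kSemi2 α Set.univ g < ⊤ →
        kSemi2 α Set.univ g ≤ ENNReal.ofReal C * kHolder α Set.univ S := by
  obtain ⟨C, hC, h⟩ := schauder_estimate_kolmogorov_general d hα1
  exact ⟨C, hC, fun S g _ hg heq =>
    h S g (continuousOn_univ.1 hg.cont) fun z => by
      simpa [heq z] using hg.hasKolmogorovAt z⟩
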